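/- arXiv:1603.08715 — 5 statements merged into one kernel-verified Lean document; each statement's English description precedes it below -/
import Mathlib

section
/- Let d, k ≥ 1 and n ≥ 2. The group S_∞ of finitely supported permutations of ℕ embeds into LP(ℤ^d,n,k); consequently RTM(ℤ^d,n,k) is not residually finite. -/
open Function

/-- `ℤ^d`. -/
abbrev V (d : ℕ) : Type := Fin d → ℤ

/-- A head configuration is valid if it carries at most one head. -/
def headOk {d k : ℕ} (y : V d → Option (Fin k)) : Prop :=
  ∀ u v : V d, (y u).isSome → (y v).isSome → u = v

/-- The space `X_{n,k}`: a tape in `Σ^{ℤ^d}` together with at most one head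
carrying a state in `Q = Fin k`. -/
abbrev X (d n k : ℕ) : Type :=
  { c : (V d → Fin n) × (V d → Option (Fin k)) // headOk c.2 }

/-- `DefinedBy F F' f T` : `T` is the moving-head Turing machine defined by the
local rule `f`, reading the tape on the window `F`, writing on the window `F'`,
changing the state and moving the head. -/
def DefinedBy {d n k : ℕ} (F F' : Finset (V d))
    (f : (V d → Fin n) → Fin k → (V d → Fin n) × Fin k × V d)
    (T : X d n k → X d n k) : Prop :=
  -- `f` only depends on the restriction of the tape to `F`, and only the
  -- restriction of its tape output to `F'` matters:
  (∀ x x' q, (∀ v ∈ F, x v = x' v) →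
      (∀ v ∈ F', (f x q).1 v = (f x' q).1 v) ∧ (f x q).2 = (f x' q).2) ∧
  -- a configuration with no head is fixed:
  (∀ c : X d n k, (∀ v, c.val.2 v = none) → T c = c) ∧
  -- if the head is at `v` in state `q`, apply the local rule there:
  (∀ (c : X d n k) (v : V d) (q : Fin k), c.val.2 v = some q →
    (∀ t, (T c).val.1 t =
      if t - v ∈ F' then (f (fun u => c.val.1 (u + v)) q).1 (t - v) else c.val.1 t) ∧
    (∀ t, (T c).val.2 t =
      if t = v + (f (fun u => c.val.1 (u + v)) q).2.2
      then some (f (fun u => c.val.1 (u + v)) q).2.1 else none))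

/-- A moving-head `(d,n,k)`-Turing machine. -/
def IsTM {d n k : ℕ} (T : X d n k → X d n k) : Prop :=
  ∃ F F' f, DefinedBy F F' f T

/-- A reversible moving-head Turing machine: a Turing machine admitting a
Turing machine inverse. -/
def IsRTM {d n k : ℕ} (T : X d n k → X d n k) : Prop :=
  IsTM T ∧ ∃ S : X d n k → X d n k, IsTM S ∧ S ∘ T = id ∧ T ∘ S = id

/-- The set of reversible Turing machines, viewed as permutations of `X_{n,k}`. -/
def RTMset (d n k : ℕ) : Set (Equiv.Perm (X d n k)) :=
  {π | IsTM (⇑π) ∧ IsTM (⇑π.symm)}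

/-- The group `RTM(ℤ^d,n,k)` of reversible Turing machines (a subgroup of the
permutation group of `X_{n,k}`; the set of reversible Turing machines is closed
under composition and inversion, so it coincides with the subgroup it generates). -/
def RTMgrp (d n k : ℕ) : Subgroup (Equiv.Perm (X d n k)) :=
  Subgroup.closure (RTMset d n k)

/-- Local permutations: reversible Turing machines that never move the head. -/
def LPset (d n k : ℕ) : Set (Equiv.Perm (X d n k)) :=
  {π | π ∈ RTMset d n k ∧
    ∀ (c : X d n k) (v : V d), ((π c).val.2 v).isSome = (c.val.2 v).isSome}

/-- The group `LP(ℤ^d,n,k)` of local permutations. -/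
def LPgrp (d n k : ℕ) : Subgroup (Equiv.Perm (X d n k)) :=
  Subgroup.closure (LPset d n k)

/-- Reversible finite-state automata: reversible Turing machines that never
change the tape. -/
def RFAset (d n k : ℕ) : Set (Equiv.Perm (X d n k)) :=
  {π | π ∈ RTMset d n k ∧ ∀ c : X d n k, (π c).val.1 = c.val.1}

/-- The group `RFA(ℤ^d,n,k)` of reversible finite-state automata. -/
def RFAgrp (d n k : ℕ) : Subgroup (Equiv.Perm (X d n k)) :=
  Subgroup.closure (RFAset d n k)

/-- State-permutations: reversible machines that never move the head and never
change the tape, only permuting the state as a function of the tape. -/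
def SPset (d n k : ℕ) : Set (Equiv.Perm (X d n k)) :=
  {π | π ∈ RTMset d n k ∧ (∀ c : X d n k, (π c).val.1 = c.val.1) ∧
    ∀ (c : X d n k) (v : V d), ((π c).val.2 v).isSome = (c.val.2 v).isSome}

/-- The group `SP(ℤ^d,n,k)` of state-permutations. -/
def SPgrp (d n k : ℕ) : Subgroup (Equiv.Perm (X d n k)) :=
  Subgroup.closure (SPset d n k)

/-- The machines `T_u` that move the head by `u ∈ ℤ^d` without changing the
tape or the state. -/
def Shiftset (d n k : ℕ) : Set (Equiv.Perm (X d n k)) :=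
  {π | ∃ u : V d, ∀ c : X d n k,
    (π c).val.1 = c.val.1 ∧ ∀ t, (π c).val.2 t = c.val.2 (t - u)}

/-- The group `Shift(ℤ^d,n,k)`. -/
def Shiftgrp (d n k : ℕ) : Subgroup (Equiv.Perm (X d n k)) :=
  Subgroup.closure (Shiftset d n k)

/-- The group `OB(ℤ^d,n,k) = ⟨Shift(ℤ^d,n,k), LP(ℤ^d,n,k)⟩` of oblivious Turing
machines. -/
def OBgrp (d n k : ℕ) : Subgroup (Equiv.Perm (X d n k)) :=
  Subgroup.closure (Shiftset d n k ∪ LPset d n k)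

/-- The group `EL(ℤ^d,n,k) = ⟨RFA(ℤ^d,n,k), LP(ℤ^d,n,k)⟩` of elementary Turing
machines. -/
def ELgrp (d n k : ℕ) : Subgroup (Equiv.Perm (X d n k)) :=
  Subgroup.closure (RFAset d n k ∪ LPset d n k)

/-- The group `S_∞` of finitely supported permutations of `ℕ`. -/
def Sinf : Subgroup (Equiv.Perm ℕ) where
  carrier := {π | {x | π x ≠ x}.Finite}
  one_mem' := by simp
  mul_mem' := by
    intro a b ha hb
    refine (ha.union hb).subset fun x hx => ?_
    by_contra h
    simp only [Set.mem_union, Set.mem_setOf_eq, not_or, not_not] at h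
    exact hx (by simp [Equiv.Perm.mul_apply, h.2, h.1])
  inv_mem' := by
    intro a ha
    refine ha.subset fun x hx => ?_
    simp only [Set.mem_setOf_eq] at hx ⊢
    intro h
    exact hx (by rw [Equiv.Perm.inv_eq_iff_eq]; exact h.symm)

/-- A group is residually finite if every nontrivial element survives in some
homomorphism to a finite group. -/
def ResiduallyFinite (G : Type*) [Group G] : Prop :=
  ∀ g : G, g ≠ 1 → ∃ (H : Type) (_ : Group H) (_ : Finite H) (φ : G →* H), φ g ≠ 1

/-!
A permutation `e` of `ℤ^d` acts on `X_{n,k}` by permuting the cells of the tape as seen from the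
head. This is a faithful action as soon as there are two tape symbols and one state, and it never
moves the head. If `e` moves only finitely many cells, then reading and writing these cells is
enough to apply `e` or `e⁻¹`, so `e` acts as a local permutation; identifying the infinite countable
set `ℤ^d` with `ℕ` embeds `S_∞`.

In a homomorphism from `S_∞` to a finite group, two of the infinitely many transpositions `(a i)`
have the same image. As all pairs of such transpositions are conjugate, all the `(a i)` have the
same image, so `(a b)(a c)` dies in every finite quotient. Residual finiteness passes to subgroups,
so `RTM(ℤ^d,n,k)` does not have it either.
-/

theorem ResiduallyFinite.of_injective {G G' : Type*} [Group G] [Group G']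
    (hG' : ResiduallyFinite G') (f : G →* G') (hf : Injective f) : ResiduallyFinite G := by
  intro g hg
  obtain ⟨H, hGroup, hFinite, φ, hφ⟩ := hG' (f g) ((map_ne_one_iff f hf).mpr hg)
  exact ⟨H, hGroup, hFinite, φ.comp f, hφ⟩

section Transpositions

open Equiv (Perm)

variable {α : Type*} [DecidableEq α] {G : Subgroup (Perm α)}

/-- The transposition `(a b)` as an element of a permutation group `G` known to contain all
transpositions. -/
def transposition (hG : ∀ a b, Equiv.swap a b ∈ G) (a b : α) : G := ⟨Equiv.swap a b, hG a b⟩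

variable (hG : ∀ a b, Equiv.swap a b ∈ G)

theorem transposition_injective_right (a : α) : Injective (transposition hG a) := by
  intro b c hbc
  have hswap : Equiv.swap a b = Equiv.swap a c := congrArg Subtype.val hbc
  simpa only [Equiv.swap_apply_left] using congrArg (· a) hswap

theorem transposition_conj (g : G) (a b : α) :
    g * transposition hG a b * g⁻¹ = transposition hG (g.1 a) (g.1 b) :=
  Subtype.ext (Equiv.swap_apply_apply g.1 a b).symm

theorem map_transposition_congr {H : Type*} [Group H] (φ : G →* H) {a b i j : α}
    (hia : i ≠ a) (hba : b ≠ a) (hij : i ≠ j) (hbj : b ≠ j)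
    (h : φ (transposition hG a i) = φ (transposition hG a j)) :
    φ (transposition hG a b) = φ (transposition hG a j) := by
  let g := transposition hG i b
  have hga : g.1 a = a := Equiv.swap_apply_of_ne_of_ne hia.symm hba.symm
  have hgi : g.1 i = b := Equiv.swap_apply_left i b
  have hgj : g.1 j = j := Equiv.swap_apply_of_ne_of_ne hij.symm hbj.symm
  calc φ (transposition hG a b)
      = φ g * φ (transposition hG a i) * (φ g)⁻¹ := by
        rw [← map_inv, ← map_mul, ← map_mul, transposition_conj, hga, hgi]
    _ = φ g * φ (transposition hG a j) * (φ g)⁻¹ := by rw [h]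
    _ = φ (transposition hG a j) := by
        rw [← map_inv, ← map_mul, ← map_mul, transposition_conj, hga, hgj]

theorem map_transposition_eq_of_finite [Infinite α] {H : Type*} [Group H] [Finite H] (φ : G →* H)
    {a b c : α} (hba : b ≠ a) (hca : c ≠ a) :
    φ (transposition hG a b) = φ (transposition hG a c) := by
  have hinf : ({a, b, c}ᶜ : Set α).Infinite := (Set.toFinite _).infinite_compl
  obtain ⟨i, hi, j, hj, hij, hφ⟩ := hinf.exists_ne_map_eq_of_mapsTo
    (Set.mapsTo_univ (fun i => φ (transposition hG a i)) _) Set.finite_univ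
  simp only [Set.mem_compl_iff, Set.mem_insert_iff, Set.mem_singleton_iff, not_or] at hi hj
  calc φ (transposition hG a b)
      = φ (transposition hG a j) := map_transposition_congr hG φ hi.1 hba hij (Ne.symm hj.2.1) hφ
    _ = φ (transposition hG a c) :=
        (map_transposition_congr hG φ hi.1 hca hij (Ne.symm hj.2.2) hφ).symm

end Transpositions

theorem not_residuallyFinite_of_swap_mem {α : Type*} [DecidableEq α] [Infinite α]
    {G : Subgroup (Equiv.Perm α)} (hG : ∀ a b, Equiv.swap a b ∈ G) : ¬ ResiduallyFinite G := by
  intro hRF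
  obtain ⟨a⟩ : Nonempty α := inferInstance
  obtain ⟨b, hba⟩ := exists_ne a
  obtain ⟨c, hc⟩ := Infinite.exists_notMem_finset {a, b}
  simp only [Finset.mem_insert, Finset.mem_singleton, not_or] at hc
  have hbc : transposition hG a b * (transposition hG a c)⁻¹ ≠ 1 := fun h =>
    hc.2 (transposition_injective_right hG a (mul_inv_eq_one.mp h)).symm
  obtain ⟨H, _, _, φ, hφ⟩ := hRF _ hbc
  apply hφ
  rw [map_mul, map_inv, mul_inv_eq_one, map_transposition_eq_of_finite hG φ hba hc.1]

theorem swap_mem_Sinf (a b : ℕ) : Equiv.swap a b ∈ Sinf :=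
  (Set.toFinite {a, b}).subset fun _ hx => (Equiv.swap_apply_ne_self_iff.mp hx).2

theorem not_residuallyFinite_Sinf : ¬ ResiduallyFinite Sinf :=
  not_residuallyFinite_of_swap_mem swap_mem_Sinf

section LocalPermutations

open Equiv (Perm)

variable {d n k : ℕ}

theorem headOk.eq_ite {y : V d → Option (Fin k)} (hy : headOk y) {v : V d} {q : Fin k}
    (hv : y v = some q) (t : V d) : y t = if t = v then some q else none := by
  split_ifs with htv
  · rw [htv, hv]
  · rw [← Option.not_isSome_iff_eq_none]
    exact fun ht => htv (hy t v ht (hv ▸ rfl))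

open Classical in
/-- The permutation `e` of the cells re-centred at the head of `y`: it is `t ↦ e (t - v) + v` if the
head is at `v`, and the identity if there is no head. -/
noncomputable def aboutHead (y : V d → Option (Fin k)) : Perm (V d) →* Perm (V d) :=
  if h : ∃ v, (y v).isSome then (MulAut.conj (Equiv.addRight h.choose)).toMonoidHom else 1

theorem aboutHead_apply {y : V d → Option (Fin k)} (hy : headOk y) {v : V d} {q : Fin k}
    (hv : y v = some q) (e : Perm (V d)) (t : V d) : aboutHead y e t = e (t - v) + v := by
  have hhead : ∃ v, (y v).isSome := ⟨v, hv ▸ rfl⟩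
  have hchoose : hhead.choose = v := hy _ _ hhead.choose_spec (hv ▸ rfl)
  simp [aboutHead, hhead, hchoose, sub_eq_add_neg]

theorem aboutHead_of_forall_eq_none {y : V d → Option (Fin k)} (hy : ∀ v, y v = none) :
    aboutHead y = 1 := by
  simp [aboutHead, hy]

/-- The action of the permutations of `ℤ^d` on `X_{n,k}` in which `e` carries the symbol at
position `u` relative to the head to position `e u` relative to the head. -/
noncomputable def permuteCells (d n k : ℕ) : Perm (V d) →* Perm (X d n k) :=
  MonoidHom.toHomPerm
    { toFun e c := ⟨(c.val.1 ∘ ⇑(aboutHead c.val.2 e)⁻¹, c.val.2), c.property⟩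
      map_one' := funext fun c => Subtype.ext (Prod.ext (by rw [map_one]; rfl) rfl)
      map_mul' a b :=
        funext fun c => Subtype.ext (Prod.ext (by rw [map_mul, mul_inv_rev]; rfl) rfl) }

theorem permuteCells_head (e : Perm (V d)) (c : X d n k) :
    (permuteCells d n k e c).val.2 = c.val.2 := rfl

theorem permuteCells_tape {c : X d n k} {v : V d} {q : Fin k} (hv : c.val.2 v = some q)
    (e : Perm (V d)) (t : V d) :
    (permuteCells d n k e c).val.1 t = c.val.1 (e⁻¹ (t - v) + v) := by
  change c.val.1 ((aboutHead c.val.2 e)⁻¹ t) = _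
  rw [← map_inv, aboutHead_apply c.property hv]

theorem permuteCells_of_forall_eq_none {c : X d n k} (hc : ∀ v, c.val.2 v = none)
    (e : Perm (V d)) : permuteCells d n k e c = c := by
  apply Subtype.ext
  change (c.val.1 ∘ ⇑(aboutHead c.val.2 e)⁻¹, c.val.2) = c.val
  simp [aboutHead_of_forall_eq_none hc]

/-- The configuration with tape `x` and the head at the origin in state `q`. -/
def headAtOrigin (x : V d → Fin n) (q : Fin k) : X d n k :=
  ⟨(x, fun v => if v = 0 then some q else none), by
    intro u v hu hv
    simp only [Option.isSome_ite] at hu hv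
    rw [hu, hv]⟩

theorem permuteCells_injective [Nontrivial (Fin n)] [Nonempty (Fin k)] :
    Injective (permuteCells d n k) := by
  rw [injective_iff_map_eq_one]
  intro e he
  ext1 s
  obtain ⟨a, b, hab⟩ := exists_pair_ne (Fin n)
  let c : X d n k := headAtOrigin (fun t => if t = s then b else a) (Classical.arbitrary _)
  have htape : c.val.1 (e s) = c.val.1 s := by
    have hmoved := permuteCells_tape (c := c) (v := 0) (if_pos rfl) e (e s)
    simpa only [he, Equiv.Perm.one_apply, sub_zero, add_zero, Equiv.Perm.inv_def,
      Equiv.symm_apply_apply] using hmoved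
  by_contra hes
  exact hab (by simpa [c, headAtOrigin, show e s ≠ s from hes] using htape)

theorem isTM_permuteCells {e : Perm (V d)} (he : {v | e v ≠ v}.Finite) :
    IsTM (permuteCells d n k e) := by
  have hfix : ∀ v, v ∉ he.toFinset → e⁻¹ v = v := by
    intro v hv
    rw [Equiv.Perm.inv_eq_iff_eq]
    simpa [eq_comm] using hv
  refine ⟨he.toFinset, he.toFinset, fun x q => (x ∘ ⇑e⁻¹, q, 0), ?reads, ?noHead, ?step⟩
  case reads =>
    intro x x' q hxx'
    refine ⟨fun v hv => hxx' (e⁻¹ v) ?_, rfl⟩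
    contrapose! hv
    rwa [(e⁻¹).injective (hfix _ hv)] at hv
  case noHead => exact fun c hc => permuteCells_of_forall_eq_none hc e
  case step =>
    intro c v q hv
    refine ⟨fun t => ?_, fun t => ?_⟩
    · rw [permuteCells_tape hv]
      split_ifs with ht
      · rfl
      · rw [hfix _ ht, sub_add_cancel]
    · rw [permuteCells_head, add_zero]
      exact c.property.eq_ite hv t

theorem permuteCells_mem_LPset {e : Perm (V d)} (he : {v | e v ≠ v}.Finite) :
    permuteCells d n k e ∈ LPset d n k := by
  have hinv : IsTM ⇑(permuteCells d n k e)⁻¹ := by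
    rw [← map_inv]
    exact isTM_permuteCells ((Equiv.Perm.set_support_symm_eq e).symm ▸ he)
  exact ⟨⟨isTM_permuteCells he, hinv⟩, fun _ _ => rfl⟩

theorem finite_support_permCongr {α β : Type*} (f : α ≃ β) {π : Perm α}
    (hπ : {x | π x ≠ x}.Finite) : {y | f.permCongr π y ≠ y}.Finite := by
  refine (hπ.image f).subset fun y hy => ⟨f.symm y, ?_, f.apply_symm_apply y⟩
  rwa [Set.mem_ofPred_eq, Ne, Equiv.eq_symm_apply]

/-- The homomorphism from `S_∞` to `LP(ℤ^d,n,k)` given by permuting the cells of the tape, numbered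
by `f` relative to the head. -/
noncomputable def sinfToLP (n k : ℕ) (f : ℕ ≃ V d) : Sinf →* LPgrp d n k :=
  ((permuteCells d n k).comp (f.permCongrHom.toMonoidHom.comp Sinf.subtype)).codRestrict _
    fun π => Subgroup.subset_closure
      (permuteCells_mem_LPset (finite_support_permCongr f π.property))

theorem sinfToLP_injective [Nontrivial (Fin n)] [Nonempty (Fin k)] (f : ℕ ≃ V d) :
    Injective (sinfToLP n k f) := by
  intro π ρ h
  exact Subtype.ext (f.permCongrHom.injective (permuteCells_injective (congrArg Subtype.val h)))

theorem LPgrp_le_RTMgrp (d n k : ℕ) : LPgrp d n k ≤ RTMgrp d n k :=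
  Subgroup.closure_mono fun _ h => h.1

end LocalPermutations

/-- For `n ≥ 2`, `S_∞` embeds into `LP(ℤ^d,n,k)`; consequently `RTM(ℤ^d,n,k)` is not
residually finite. -/
theorem sInf_embeds_lp_and_rtm_not_residuallyFinite (d n k : ℕ)
    (hd : 1 ≤ d) (hn : 2 ≤ n) (hk : 1 ≤ k) :
    (∃ φ : Sinf →* LPgrp d n k, Function.Injective ⇑φ) ∧
    ¬ ResiduallyFinite (RTMgrp d n k) := by
  have : Nonempty (Fin d) := Fin.pos_iff_nonempty.mp hd
  have : Nontrivial (Fin n) := Fin.nontrivial_iff_two_le.mpr hn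
  have : Nonempty (Fin k) := Fin.pos_iff_nonempty.mp hk
  obtain ⟨f⟩ : Nonempty (ℕ ≃ V d) := inferInstance
  have hLP : Injective (sinfToLP n k f) := sinfToLP_injective f
  refine ⟨⟨sinfToLP n k f, hLP⟩, fun hRTM => not_residuallyFinite_Sinf ?_⟩
  have hle := LPgrp_le_RTMgrp d n k
  exact hRTM.of_injective ((Subgroup.inclusion hle).comp (sinfToLP n k f))
    ((Subgroup.inclusion_injective hle).comp hLP)
end

section
/- Let d, k ≥ 1 and n ≥ 2, and let G be a finite group. Then the restricted wreath product G ≀ ℤ^d embeds into OB(ℤ^d,n,k). -/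
open Function

/-- The subgroup of `G^{ℤ^d}` of finitely supported functions (the base group
`⨁_{ℤ^d} G` of the restricted wreath product). -/
def lampSupp (d : ℕ) (G : Type) [Group G] : Subgroup (V d → G) where
  carrier := {f | {v | f v ≠ 1}.Finite}
  one_mem' := by simp
  mul_mem' := by
    intro a b ha hb
    refine (ha.union hb).subset fun v hv => ?_
    by_contra h
    simp only [Set.mem_union, Set.mem_setOf_eq, not_or, not_not] at h
    exact hv (by simp [Pi.mul_apply, h.1, h.2])
  inv_mem' := by
    intro a ha
    refine ha.subset fun v hv => ?_
    simp only [Set.mem_setOf_eq] at hv ⊢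
    intro h
    exact hv (by simp [Pi.inv_apply, h])

/-- Translation by `u ∈ ℤ^d` as an automorphism of `⨁_{ℤ^d} G`. -/
def transAut (d : ℕ) (G : Type) [Group G] (u : V d) : MulAut (lampSupp d G) where
  toFun f := ⟨fun v => f.val (v - u), by
    refine (f.prop.image (fun v => v + u)).subset fun v hv => ?_
    exact ⟨v - u, hv, by ring⟩⟩
  invFun f := ⟨fun v => f.val (v + u), by
    refine (f.prop.image (fun v => v - u)).subset fun v hv => ?_
    exact ⟨v + u, hv, by ring⟩⟩
  left_inv f := Subtype.ext (funext fun v => congrArg f.val (by ring))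
  right_inv f := Subtype.ext (funext fun v => congrArg f.val (by ring))
  map_mul' f g := rfl

/-- The translation action of `ℤ^d` on `⨁_{ℤ^d} G`. -/
def wreathAct (d : ℕ) (G : Type) [Group G] :
    Multiplicative (V d) →* MulAut (lampSupp d G) where
  toFun u := transAut d G u.toAdd
  map_one' := by
    ext f v
    exact congrArg f.val (by rw [toAdd_one, sub_zero])
  map_mul' u w := by
    ext f v
    exact congrArg f.val (by rw [toAdd_mul]; exact (sub_sub _ _ _).symm)

/-!
Let the machine `T_v` act on `X_{n,k}` by moving the head by `v`, and let a permutation `π` of the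
tapes act on `X_{n,k}` by applying `π` to the tape as seen from the head; if `π` involves only a
finite window, this is a local permutation. Conjugation by `T_v` turns the action of `π` into that
of the translate of `π` by `-v`, and the two kinds of action have only the identity in common.

Choose `N` so large that `G` acts faithfully on the patterns on a cube of side `N`, cut `ℤ^d` into
translates of this cube indexed by `ℤ^d`, and let the lamp at `b` act on the tape contents of the
cube with index `b` relative to the head. Moving the head by `-N • u` then translates the lamps by
`u`, so the lamps and the machines `T_{-N • u}` generate a copy of `G ≀ ℤ^d`.
-/

open Equiv (Perm)
open scoped translate

section PatternPermutations

variable {T A : Type*}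

/-- The permutation `π` of `T → A` is supported on `F`: it changes a pattern only inside `F`, and
its effect there depends only on the pattern inside `F`. -/
def SupportedOn (F : Set T) (π : Perm (T → A)) : Prop :=
  (∀ x, Set.EqOn (π x) x Fᶜ) ∧ ∀ x y, Set.EqOn x y F → Set.EqOn (π x) (π y) F

theorem SupportedOn.symm {F : Set T} {π : Perm (T → A)} (hπ : SupportedOn F π) :
    SupportedOn F π.symm := by
  classical
  obtain ⟨fixes_compl, depends_on⟩ := hπ
  refine ⟨fun x t ht => ?_, fun x y hxy => ?_⟩
  · simpa using (fixes_compl (π.symm x) ht).symm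
  · have preimage_y : π (F.piecewise (π.symm x) y) = y := by
      funext t
      by_cases ht : t ∈ F
      · rw [depends_on _ _ (F.piecewise_eqOn (π.symm x) y) ht, π.apply_symm_apply, hxy ht]
      · rw [fixes_compl _ ht, F.piecewise_eq_of_notMem _ _ ht]
    rw [← (Equiv.eq_symm_apply π).mpr preimage_y]
    exact (F.piecewise_eqOn _ _).symm

/-- Translation of patterns on an abelian group, as a permutation. -/
def translatePerm [AddCommGroup T] (v : T) : Perm (T → A) where
  toFun := τ v
  invFun := τ (-v)
  left_inv x := by rw [← translate_add, neg_add_cancel, translate_zero]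
  right_inv x := by rw [← translate_add, add_neg_cancel, translate_zero]

theorem translatePerm_apply [AddCommGroup T] (v : T) (x : T → A) : translatePerm v x = τ v x :=
  rfl

theorem translatePerm_symm_apply [AddCommGroup T] (v : T) (x : T → A) :
    (translatePerm v).symm x = τ (-v) x :=
  rfl

theorem translatePerm_zero [AddCommGroup T] : translatePerm (A := A) (0 : T) = 1 :=
  Equiv.ext translate_zero

theorem translatePerm_add [AddCommGroup T] (v w : T) :
    translatePerm (A := A) (v + w) = translatePerm v * translatePerm w :=
  Equiv.ext (translate_add v w)

variable {B R : Type*} (s : T ≃ B × R)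

/-- For `T` cut into blocks of shape `R` indexed by `B`, the family `π` of permutations of
`R`-patterns acts on `T`-patterns by applying `π b` to the contents of the block `b`. -/
def blockwise : (B → Perm (R → A)) →* Perm (T → A) :=
  ((s.arrowCongr (Equiv.refl A)).trans (Equiv.curry B R A)).symm.permCongrHom.toMonoidHom.comp
    { toFun := Equiv.piCongrRight
      map_one' := rfl
      map_mul' _ _ := rfl }

theorem blockwise_apply (π : B → Perm (R → A)) (x : T → A) (t : T) :
    blockwise s π x t = π (s t).1 (fun r => x (s.symm ((s t).1, r))) (s t).2 :=
  rfl

theorem blockwise_supportedOn (π : B → Perm (R → A)) :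
    SupportedOn {t | π (s t).1 ≠ 1} (blockwise s π) := by
  refine ⟨fun x t ht => ?_, fun x y hxy t ht => ?_⟩
  · have : π (s t).1 = 1 := not_not.mp ht
    simp [blockwise_apply, this]
  · have block_eq : (fun r => x (s.symm ((s t).1, r))) = fun r => y (s.symm ((s t).1, r)) :=
      funext fun r => hxy (by simpa using ht)
    rw [blockwise_apply, blockwise_apply, block_eq]

theorem blockwise_injective : Injective (blockwise (A := A) s) := by
  intro π₁ π₂ h
  ext b x r
  simpa [blockwise_apply] using congrFun (Equiv.congr_fun h fun t => x (s t).2) (s.symm (b, r))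

theorem conj_translatePerm_blockwise [AddCommGroup T] [AddGroup B] {v : T} {u : B}
    (hs : ∀ t, s (t + v) = ((s t).1 + u, (s t).2)) (π : B → Perm (R → A)) :
    MulAut.conj (translatePerm v) (blockwise s π) = blockwise s fun b => π (b - u) := by
  have hs_sub (t : T) : s (t - v) = ((s t).1 - u, (s t).2) := by
    rw [← sub_add_cancel t v, hs]; simp
  have hs_symm (b : B) (r : R) : s.symm (b - u, r) + v = s.symm (b, r) := by
    rw [Equiv.eq_symm_apply, hs]; simp
  ext x t
  simp [blockwise_apply, translatePerm_apply, translatePerm_symm_apply, hs_sub, hs_symm]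

end PatternPermutations

section Configurations

variable {d n k : ℕ}

/-- The head layer with no head, or with a single head of given position and state. -/
def headLayer : Option (V d × Fin k) → V d → Option (Fin k)
  | none, _ => none
  | some (v, q), t => if t = v then some q else none

theorem headLayer_eq_some_iff {h : Option (V d × Fin k)} {t : V d} {q : Fin k} :
    headLayer h t = some q ↔ h = some (t, q) := by
  rcases h with _ | ⟨v, p⟩
  · simp [headLayer]
  · simp [headLayer, eq_comm]

theorem headLayer_injective : Injective (headLayer (d := d) (k := k)) := fun h h' heq =>
  Option.ext fun ⟨t, q⟩ => by simp only [← headLayer_eq_some_iff, heq]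

theorem headOk_headLayer (h : Option (V d × Fin k)) : headOk (headLayer h) := by
  simp only [headOk, Option.isSome_iff_exists, headLayer_eq_some_iff]
  rintro u v ⟨q, rfl⟩ ⟨p, hp⟩
  simp_all

theorem headOk.exists_headLayer_eq {y : V d → Option (Fin k)} (hy : headOk y) :
    ∃ h, headLayer h = y := by
  by_cases hhead : ∃ v q, y v = some q
  · obtain ⟨v, q, hq⟩ := hhead
    refine ⟨some (v, q), funext fun t => Option.ext fun p => ?_⟩
    rw [headLayer_eq_some_iff]
    constructor
    · rintro ⟨⟩
      exact hq
    · intro hp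
      obtain rfl : v = t := hy v t (by simp [hq]) (by simp [hp])
      simp_all
  · exact ⟨none, funext fun t => Option.ext fun p => by simp_all [headLayer]⟩

variable (d n k) in
/-- `X_{n,k}` as the product of the possible heads and the tapes. -/
noncomputable def configEquiv : Option (V d × Fin k) × (V d → Fin n) ≃ X d n k :=
  Equiv.ofBijective (fun c => ⟨(c.2, headLayer c.1), headOk_headLayer c.1⟩) <| by
    constructor
    · rintro ⟨h, x⟩ ⟨h', x'⟩ heq
      obtain ⟨htape, hlayer⟩ := Prod.ext_iff.mp (congrArg Subtype.val heq)
      exact Prod.ext (headLayer_injective hlayer) htape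
    · rintro ⟨⟨x, y⟩, hy⟩
      obtain ⟨h, rfl⟩ := hy.exists_headLayer_eq
      exact ⟨(h, x), rfl⟩

theorem configEquiv_tape (h : Option (V d × Fin k)) (x : V d → Fin n) :
    (configEquiv d n k (h, x)).val.1 = x :=
  rfl

theorem configEquiv_head (h : Option (V d × Fin k)) (x : V d → Fin n) :
    (configEquiv d n k (h, x)).val.2 = headLayer h :=
  rfl

variable (d n k) in
/-- The machine `T_u` that moves the head by `u`. -/
noncomputable def headShift : Multiplicative (V d) →* Perm (X d n k) :=
  (configEquiv d n k).permCongrHom.toMonoidHom.comp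
    { toFun u := (Equiv.optionCongr ((Equiv.addLeft u.toAdd).prodCongr (Equiv.refl _))).prodCongr
        (Equiv.refl _)
      map_one' := by ext ⟨_ | _, _⟩ <;> simp
      map_mul' u w := by ext ⟨_ | _, _⟩ <;> simp [Prod.map, add_assoc] }

theorem headShift_configEquiv (u : Multiplicative (V d)) (h : Option (V d × Fin k))
    (x : V d → Fin n) :
    headShift d n k u (configEquiv d n k (h, x)) =
      configEquiv d n k (h.map fun p => (u.toAdd + p.1, p.2), x) := by
  rcases h with _ | ⟨v, q⟩ <;> simp [headShift]

theorem headShift_mem_Shiftset (u : Multiplicative (V d)) :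
    headShift d n k u ∈ Shiftset d n k := by
  refine ⟨u.toAdd, fun c => ?_⟩
  obtain ⟨⟨_ | ⟨v, q⟩, x⟩, rfl⟩ := (configEquiv d n k).surjective c
  · rw [headShift_configEquiv]
    exact ⟨rfl, fun t => rfl⟩
  · rw [headShift_configEquiv]
    refine ⟨rfl, fun t => ?_⟩
    simp [configEquiv_head, headLayer, sub_eq_iff_eq_add']

variable (d n k) in
/-- A permutation of the tapes, applied to the tape as seen from the head. -/
noncomputable def atHead : Perm (V d → Fin n) →* Perm (X d n k) :=
  (configEquiv d n k).permCongrHom.toMonoidHom.comp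
    { toFun π := Equiv.prodCongrRight fun h => h.elim 1 fun p => MulAut.conj (translatePerm p.1) π
      map_one' := by ext ⟨_ | _, _⟩ <;> simp
      map_mul' π ψ := by ext ⟨_ | _, _⟩ <;> simp }

theorem atHead_configEquiv_none (π : Perm (V d → Fin n)) (x : V d → Fin n) :
    atHead d n k π (configEquiv d n k (none, x)) = configEquiv d n k (none, x) := by
  simp [atHead]

theorem atHead_configEquiv_some (π : Perm (V d → Fin n)) (v : V d) (q : Fin k)
    (x : V d → Fin n) :
    atHead d n k π (configEquiv d n k (some (v, q), x)) =
      configEquiv d n k (some (v, q), MulAut.conj (translatePerm v) π x) := by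
  simp [atHead]

theorem atHead_head (π : Perm (V d → Fin n)) (c : X d n k) :
    (atHead d n k π c).val.2 = c.val.2 := by
  obtain ⟨⟨_ | ⟨v, q⟩, x⟩, rfl⟩ := (configEquiv d n k).surjective c
  · rw [atHead_configEquiv_none]
  · rw [atHead_configEquiv_some, configEquiv_head, configEquiv_head]

theorem isTM_atHead {F : Set (V d)} (hF : F.Finite) {π : Perm (V d → Fin n)}
    (hπ : SupportedOn F π) : IsTM (atHead d n k π) := by
  lift F to Finset (V d) using hF
  refine ⟨F, F, fun x q => (π x, q, 0), fun x y q hxy => ⟨hπ.2 x y hxy, rfl⟩, fun c hc => ?_,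
    fun c v q hq => ?_⟩
  all_goals obtain ⟨⟨h, x⟩, rfl⟩ := (configEquiv d n k).surjective c
  · obtain rfl : h = none := headLayer_injective (funext hc)
    exact atHead_configEquiv_none π x
  · obtain rfl : h = some (v, q) := headLayer_eq_some_iff.mp hq
    have relative_tape : (fun u => x (u + v)) = τ (-v) x := by ext; simp
    rw [atHead_configEquiv_some]
    refine ⟨fun t => ?_, fun t => by simp [configEquiv_head, headLayer]⟩
    by_cases ht : t - v ∈ F
    · simp [configEquiv_tape, ht, relative_tape, translatePerm_apply, translatePerm_symm_apply]
    · have outside : π (τ (-v) x) (t - v) = x t := by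
        rw [hπ.1 _ ht, translate_apply, sub_neg_eq_add, sub_add_cancel]
      simpa [configEquiv_tape, ht, translatePerm_apply, translatePerm_symm_apply] using outside

theorem atHead_mem_LPset {F : Set (V d)} (hF : F.Finite) {π : Perm (V d → Fin n)}
    (hπ : SupportedOn F π) : atHead d n k π ∈ LPset d n k := by
  refine ⟨⟨isTM_atHead hF hπ, ?_⟩, fun c v => by rw [atHead_head]⟩
  have inverse : (atHead d n k π).symm = atHead d n k π.symm := (map_inv (atHead d n k) π).symm
  rw [inverse]
  exact isTM_atHead hF hπ.symm

theorem conj_headShift_atHead (u : Multiplicative (V d)) (π : Perm (V d → Fin n)) :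
    MulAut.conj (headShift d n k u) (atHead d n k π) =
      atHead d n k (MulAut.conj (translatePerm (-u.toAdd)) π) := by
  rw [MulAut.conj_apply, mul_inv_eq_iff_eq_mul]
  ext1 c
  obtain ⟨⟨_ | ⟨v, q⟩, x⟩, rfl⟩ := (configEquiv d n k).surjective c
  · simp only [Perm.mul_apply, headShift_configEquiv, atHead_configEquiv_none, Option.map_none]
  · have conj_conj : MulAut.conj (translatePerm (u.toAdd + v))
        (MulAut.conj (translatePerm (-u.toAdd)) π) = MulAut.conj (translatePerm v) π := by
      rw [← MulAut.mul_apply, ← map_mul, ← translatePerm_add]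
      congr 3
      abel
    simp only [Perm.mul_apply, headShift_configEquiv, atHead_configEquiv_some, Option.map_some,
      conj_conj]

theorem eq_one_of_atHead_mul_headShift_eq_one [NeZero n] [NeZero k] {π : Perm (V d → Fin n)}
    {u : Multiplicative (V d)} (h : atHead d n k π * headShift d n k u = 1) : π = 1 ∧ u = 1 := by
  have fixed (x : V d → Fin n) :
      configEquiv d n k (some (u.toAdd, 0), MulAut.conj (translatePerm u.toAdd) π x) =
        configEquiv d n k (some (0, 0), x) := by
    simpa [headShift_configEquiv, atHead_configEquiv_some] using
      Equiv.congr_fun h (configEquiv d n k (some (0, 0), x))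
  obtain rfl : u = 1 := by
    simpa using congrArg Prod.fst ((configEquiv d n k).injective (fixed 0))
  refine ⟨Equiv.ext fun x => ?_, rfl⟩
  simpa [translatePerm_zero] using (configEquiv d n k).injective (fixed x)

end Configurations

/-- `ℤ^d` cut into cubes of side `N`, the cube with index `b` having its least corner at
`N • b`. -/
def cubeEquiv (d N : ℕ) [NeZero N] : V d ≃ V d × (Fin d → Fin N) :=
  (Equiv.piCongrRight fun _ => Int.divModEquiv N).trans
    (Equiv.arrowProdEquivProdArrow (Fin d) (fun _ => ℤ) fun _ => Fin N)

theorem cubeEquiv_add_nsmul {d N : ℕ} [NeZero N] (t u : V d) :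
    cubeEquiv d N (t + N • u) = ((cubeEquiv d N t).1 + u, (cubeEquiv d N t).2) := by
  ext i
  · simp [cubeEquiv, Int.divModEquiv, Equiv.arrowProdEquivProdArrow,
      Int.add_mul_ediv_left _ _ (Nat.cast_ne_zero.mpr (NeZero.ne N))]
  · simp [cubeEquiv, Int.divModEquiv, Equiv.arrowProdEquivProdArrow, Int.natMod]

theorem exists_injective_hom_perm_of_card_le {G α : Type*} [Group G] [Finite G] [Finite α]
    (h : Nat.card G ≤ Nat.card α) : ∃ ρ : G →* Perm α, Injective ρ := by
  have := Fintype.ofFinite G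
  have := Fintype.ofFinite α
  obtain ⟨e⟩ := Embedding.nonempty_of_card_le (by simpa using h)
  exact ⟨(Perm.viaEmbeddingHom e).comp (MulAction.toPermHom G G),
    (Perm.viaEmbeddingHom_injective e).comp MulAction.toPerm_injective⟩

theorem le_card_cube_patterns {d n : ℕ} (hd : d ≠ 0) (hn : 1 < n) (N : ℕ) :
    N ≤ Nat.card ((Fin d → Fin N) → Fin n) := by
  simp only [Nat.card_fun, Nat.card_fin]
  exact (Nat.le_self_pow hd N).trans (Nat.lt_pow_self hn).le

section Lamps

variable {d n N : ℕ} (k : ℕ) {G : Type} [Group G] [NeZero N]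
  (ρ : G →* Perm ((Fin d → Fin N) → Fin n))

/-- The action of `⨁_{ℤ^d} G` on tapes in which the lamp at `b` acts through `ρ` on the contents of
the cube with index `b`. -/
def lampPerm : lampSupp d G →* Perm (V d → Fin n) :=
  ((blockwise (cubeEquiv d N)).comp (ρ.compLeft (V d))).comp (lampSupp d G).subtype

variable {ρ} in
theorem lampPerm_injective (hρ : Injective ρ) : Injective (lampPerm ρ) :=
  ((blockwise_injective _).comp hρ.comp_left).comp Subtype.val_injective

theorem exists_finite_supportedOn_lampPerm (f : lampSupp d G) :
    ∃ F : Set (V d), F.Finite ∧ SupportedOn F (lampPerm ρ f) := by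
  refine ⟨_, ?_, blockwise_supportedOn (cubeEquiv d N) (ρ ∘ f.val)⟩
  have finite_support : {b | ρ (f.val b) ≠ 1}.Finite :=
    f.prop.subset fun b hb hfb => hb (by rw [hfb, map_one])
  exact (finite_support.prod Set.finite_univ).preimage (cubeEquiv d N).injective.injOn
    |>.subset fun t ht => ⟨ht, trivial⟩

theorem lampPerm_wreathAct (u : Multiplicative (V d)) (f : lampSupp d G) :
    lampPerm ρ (wreathAct d G u f) =
      MulAut.conj (translatePerm (N • u.toAdd)) (lampPerm ρ f) := by
  simp only [lampPerm, MonoidHom.comp_apply]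
  rw [conj_translatePerm_blockwise _ fun t => cubeEquiv_add_nsmul t u.toAdd]
  rfl

/-- The action of `⨁_{ℤ^d} G` by local permutations, the lamps acting on the tape as seen from the
head. -/
noncomputable def lampAction : lampSupp d G →* Perm (X d n k) :=
  (atHead d n k).comp (lampPerm ρ)

theorem lampAction_mem_LPset (f : lampSupp d G) : lampAction k ρ f ∈ LPset d n k := by
  obtain ⟨F, hF, hsupp⟩ := exists_finite_supportedOn_lampPerm ρ f
  exact atHead_mem_LPset hF hsupp

theorem lampAction_wreathAct (u : Multiplicative (V d)) (f : lampSupp d G) :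
    lampAction k ρ (wreathAct d G u f) =
      MulAut.conj (headShift d n k (u ^ (-N : ℤ))) (lampAction k ρ f) := by
  have shift_back : -(u ^ (-N : ℤ)).toAdd = N • u.toAdd := by simp
  simp only [lampAction, MonoidHom.comp_apply]
  rw [conj_headShift_atHead, shift_back, lampPerm_wreathAct]

/-- The action of `G ≀ ℤ^d` in which `⨁_{ℤ^d} G` acts by `lampAction` and `u ∈ ℤ^d` moves the head
by `-N • u`. -/
noncomputable def wreathAction :
    lampSupp d G ⋊[wreathAct d G] Multiplicative (V d) →* Perm (X d n k) :=
  SemidirectProduct.lift (lampAction k ρ) ((headShift d n k).comp (zpowGroupHom (-N))) fun u =>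
    MonoidHom.ext (lampAction_wreathAct k ρ u)

theorem wreathAction_mem_OBgrp (a : lampSupp d G ⋊[wreathAct d G] Multiplicative (V d)) :
    wreathAction k ρ a ∈ OBgrp d n k :=
  mul_mem (Subgroup.subset_closure (Or.inr (lampAction_mem_LPset k ρ a.left)))
    (Subgroup.subset_closure (Or.inl (headShift_mem_Shiftset (a.right ^ (-N : ℤ)))))

variable {ρ} in
theorem wreathAction_injective [NeZero n] [NeZero k] (hρ : Injective ρ) :
    Injective (wreathAction k ρ) := by
  refine (injective_iff_map_eq_one _).mpr fun a ha => ?_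
  obtain ⟨lamps_trivial, shift_trivial⟩ := eq_one_of_atHead_mul_headShift_eq_one ha
  have shift_injective : Injective fun u : Multiplicative (V d) => u ^ (-N : ℤ) :=
    zpow_left_injective (neg_ne_zero.mpr (Nat.cast_ne_zero.mpr (NeZero.ne N)))
  exact SemidirectProduct.ext ((map_eq_one_iff _ (lampPerm_injective hρ)).mp lamps_trivial)
    (shift_injective (shift_trivial.trans (one_zpow _).symm))

end Lamps

/-- For `n ≥ 2` and any finite group `G`, the restricted wreath product
`G ≀ ℤ^d = (⨁_{ℤ^d} G) ⋊ ℤ^d` embeds into `OB(ℤ^d,n,k)`. -/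
theorem wreath_embeds_ob (d n k : ℕ) (hd : 1 ≤ d) (hn : 2 ≤ n) (hk : 1 ≤ k)
    (G : Type) [Group G] [Finite G] :
    ∃ φ : (lampSupp d G) ⋊[wreathAct d G] Multiplicative (V d) →* OBgrp d n k,
      Function.Injective ⇑φ := by
  have : NeZero n := ⟨by lia⟩
  have : NeZero k := ⟨by lia⟩
  have : NeZero (Nat.card G) := ⟨Nat.card_pos.ne'⟩
  obtain ⟨ρ, hρ⟩ := exists_injective_hom_perm_of_card_le
    (le_card_cube_patterns (by lia : d ≠ 0) hn (Nat.card G))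
  exact ⟨(wreathAction k ρ).codRestrict _ (wreathAction_mem_OBgrp k ρ),
    (wreathAction_injective k hρ).codRestrict _⟩
end

section
/- For all d, n, k ≥ 1, the group OB(ℤ^d,n,k) of oblivious Turing machines is finitely generated. -/
open Function

/-! Conjugating by head shifts translates the window of a local permutation, and local permutations
on a window containing `0` and generators of `ℤ^d` supply the swaps of neighbouring cells. So
the shifts and the local permutations of one fixed window with at least four cells generate all
local permutations on at most four cells.

These in turn generate all local permutations. A commutator of permutations controlled by `C` and
by `D` is controlled by `C ∩ D`, so starting from one control cell the perfect alternating group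
on the windows of three cells can be controlled by arbitrarily many cells. The passage from even
permutations to transpositions is a parity argument on the number of symbols, and transpositions
of windows on two cells, controlled by all other cells, generate the symmetric group of any
larger window. -/

namespace ObliviousTM

open Equiv
open scoped commutatorElement

section Perm

lemma prodCongrRight_mulSingle_swap {α β : Type*} [DecidableEq α] [DecidableEq β] (a : α)
    (p q : β) : prodCongrRight (Pi.mulSingle a (swap p q)) = swap (a, p) (a, q) := by
  ext1 ⟨a', b⟩
  rcases eq_or_ne a' a with rfl | h
  · simp only [prodCongrRight_apply, Pi.mulSingle_eq_same, swap_apply_def, Prod.mk.injEq, true_and]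
    split_ifs <;> rfl
  · simp [swap_apply_def, h]

lemma eq_top_of_swap_mem_of_agree_off {ι S Q : Type*} [Finite ι] [Nonempty ι] [Finite S] [Finite Q]
    [DecidableEq ((ι → S) × Q)] {M : Subgroup (Perm ((ι → S) × Q))}
    (hM : ∀ (i : ι) (p q : (ι → S) × Q), (∀ j ≠ i, p.1 j = q.1 j) → swap p q ∈ M) : M = ⊤ := by
  classical
  have swap_mem (s : Finset ι) : ∀ p q : (ι → S) × Q, (∀ j ∉ s, p.1 j = q.1 j) → swap p q ∈ M := by
    induction s using Finset.induction_on with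
    | empty => exact fun p q h => hM (Classical.arbitrary ι) p q fun j _ => h j (by simp)
    | insert i s _ ih =>
      intro p q h
      let r : (ι → S) × Q := (Function.update p.1 i (q.1 i), p.2)
      refine SubmonoidClass.swap_mem_trans M (hM i p r fun j hj => ?_) (ih r q fun j hj => ?_)
      · simp [r, hj]
      · rcases eq_or_ne j i with rfl | hji
        · simp [r]
        · simp [r, hji, h j (by simp [hj, hji])]
  have := Fintype.ofFinite ι
  rw [eq_top_iff, ← Perm.closure_isSwap, Subgroup.closure_le]
  rintro _ ⟨p, q, -, rfl⟩
  exact swap_mem Finset.univ p q (by simp)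

end Perm

/-- A tape `I → S` seen from the head, together with the state of the head in `Q`. -/
abbrev Config (I S Q : Type*) : Type _ := (I → S) × Q

/-- The part of a configuration visible on the finite set of cells `E`: its tape there and the
state. -/
abbrev Window {I : Type*} (S Q : Type*) (E : Finset I) : Type _ := (E → S) × Q

/-- Tape contents outside the finite set of cells `E`. -/
abbrev Outside {I : Type*} (S : Type*) (E : Finset I) : Type _ := {i // i ∉ E} → S

section Window

variable {I S Q : Type*}

/-- The restriction of a configuration to the cells of `E`. -/
def window (E : Finset I) (w : Config I S Q) : Window S Q E := (E.restrict w.1, w.2)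

/-- The restriction of a tape to the cells outside `E`. -/
def outside (E : Finset I) (x : I → S) : Outside S E := fun i => x i

variable [DecidableEq I]

/-- The configuration showing `b` on the cells of `E` and the tape `x` elsewhere. -/
def glue (E : Finset I) (b : Window S Q E) (x : I → S) : Config I S Q :=
  (fun i => if h : i ∈ E then b.1 ⟨i, h⟩ else x i, b.2)

lemma glue_fst_of_notMem {E : Finset I} {i : I} (hi : i ∉ E) (b : Window S Q E) (x : I → S) :
    (glue E b x).1 i = x i := by
  simp [glue, hi]

@[simp] lemma window_glue (E : Finset I) (b : Window S Q E) (x : I → S) :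
    window E (glue E b x) = b := by
  ext <;> simp [window, glue]

@[simp] lemma outside_glue (E : Finset I) (b : Window S Q E) (x : I → S) :
    outside E (glue E b x).1 = outside E x :=
  funext fun i => glue_fst_of_notMem i.2 b x

lemma glue_window_of_eqOn_compl {E : Finset I} {w : Config I S Q} {x : I → S}
    (hx : ∀ i ∉ E, w.1 i = x i) : glue E (window E w) x = w := by
  refine Prod.ext (funext fun i => ?_) rfl
  by_cases hi : i ∈ E <;> simp [glue, window, hi, hx]

@[simp] lemma glue_window (E : Finset I) (w : Config I S Q) : glue E (window E w) w.1 = w :=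
  glue_window_of_eqOn_compl fun _ _ => rfl

@[simp] lemma glue_glue (E : Finset I) (b b' : Window S Q E) (x : I → S) :
    glue E b (glue E b' x).1 = glue E b x := by
  refine Prod.ext (funext fun i => ?_) rfl
  by_cases hi : i ∈ E <;> simp [glue, hi]

/-- A window on `F` is a window on `E ⊆ F` together with the tape on the remaining cells. -/
def windowEquiv {E F : Finset I} (hEF : E ⊆ F) :
    Window S Q F ≃ (↥(F \ E) → S) × Window S Q E where
  toFun b := (fun i => b.1 ⟨i, Finset.sdiff_subset i.2⟩, (fun i => b.1 ⟨i, hEF i.2⟩, b.2))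
  invFun b := (fun i => if h : i.1 ∈ E then b.2.1 ⟨i, h⟩ else
    b.1 ⟨i, Finset.mem_sdiff.2 ⟨i.2, h⟩⟩, b.2.2)
  left_inv b := by ext <;> simp
  right_inv b := by
    refine Prod.ext (funext fun i => ?_) (Prod.ext (funext fun i => ?_) rfl)
    · simp [(Finset.mem_sdiff.1 i.2).2]
    · simp

lemma windowEquiv_symm_apply {E F : Finset I} (hEF : E ⊆ F) (a : I → S) (b : Window S Q E) :
    (windowEquiv hEF).symm ((F \ E).restrict a, b) = window F (glue E b a) :=
  rfl

end Window

section Shear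

variable {I S Q : Type*} [DecidableEq I]

/-- Rewriting the window on `E` by a permutation that depends on the tape outside `E`. -/
def shear (E : Finset I) : (Outside S E → Perm (Window S Q E)) →* Perm (Config I S Q) where
  toFun φ :=
    { toFun w := glue E (φ (outside E w.1) (window E w)) w.1
      invFun w := glue E ((φ (outside E w.1))⁻¹ (window E w)) w.1
      left_inv w := by simp
      right_inv w := by simp }
  map_one' := by ext1 w; simp
  map_mul' φ ψ := by ext1 w; simp

lemma shear_apply (E : Finset I) (φ : Outside S E → Perm (Window S Q E)) (w : Config I S Q) :
    shear E φ w = glue E (φ (outside E w.1) (window E w)) w.1 := rfl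

/-- Rewriting the window on `E` by a fixed permutation. -/
def localHom (E : Finset I) : Perm (Window S Q E) →* Perm (Config I S Q) :=
  (shear E).comp (Pi.constMonoidHom (Outside S E) (Perm (Window S Q E)))

lemma localHom_apply (E : Finset I) (g : Perm (Window S Q E)) (w : Config I S Q) :
    localHom E g w = glue E (g (window E w)) w.1 := rfl

/-- The permutation of the windows on `F ⊇ E` that acts on the window on `E` by a permutation
depending on the remaining cells of `F`. -/
def fiberwise {E F : Finset I} (hEF : E ⊆ F) :
    ((↥(F \ E) → S) → Perm (Window S Q E)) →* Perm (Window S Q F) where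
  toFun ψ := (windowEquiv hEF).symm.permCongr (prodCongrRight ψ)
  map_one' := by ext1 b; simp [permCongr_apply, prodCongrRight]
  map_mul' ψ ψ' := by ext1 b; simp [permCongr_apply, prodCongrRight]

lemma fiberwise_apply {E F : Finset I} (hEF : E ⊆ F)
    (ψ : (↥(F \ E) → S) → Perm (Window S Q E)) :
    fiberwise hEF ψ = (windowEquiv hEF).symm.permCongr (prodCongrRight ψ) := rfl

lemma fiberwise_mulSingle_swap [DecidableEq S] [DecidableEq Q] {E F : Finset I} (hEF : E ⊆ F)
    (a : I → S) (p q : Window S Q E) :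
    fiberwise hEF (Pi.mulSingle ((F \ E).restrict a) (swap p q)) =
      swap (window F (glue E p a)) (window F (glue E q a)) := by
  rw [fiberwise_apply, prodCongrRight_mulSingle_swap, permCongr_def, symm_trans_swap_trans,
    windowEquiv_symm_apply, windowEquiv_symm_apply]

lemma shear_eq_shear_fiberwise {E F : Finset I} (hEF : E ⊆ F)
    {φ : Outside S E → Perm (Window S Q E)}
    {ψ : Outside S F → (↥(F \ E) → S) → Perm (Window S Q E)}
    (h : ∀ x, φ (outside E x) = ψ (outside F x) ((F \ E).restrict x)) :
    shear E φ = shear F fun r => fiberwise hEF (ψ r) := by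
  ext1 w
  have hw : windowEquiv hEF (window F w) = ((F \ E).restrict w.1, window E w) := rfl
  simp only [shear_apply, h, fiberwise_apply, permCongr_apply, symm_symm, hw, prodCongrRight_apply,
    windowEquiv_symm_apply]
  refine (glue_window_of_eqOn_compl fun i hi => ?_).symm
  exact glue_fst_of_notMem (fun hiE => hi (hEF hiE)) _ _

lemma sign_fiberwise [Fintype S] [DecidableEq S] [Fintype Q] [DecidableEq Q] {E F : Finset I}
    (hEF : E ⊆ F) (ψ : (↥(F \ E) → S) → Perm (Window S Q E)) :
    Perm.sign (fiberwise hEF ψ) = ∏ a, Perm.sign (ψ a) := by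
  rw [fiberwise_apply, Perm.sign_permCongr, Perm.sign_prodCongrRight]

lemma sign_fiberwise_const [Fintype S] [DecidableEq S] [Fintype Q] [DecidableEq Q]
    {E F : Finset I} (hEF : E ⊆ F) (g : Perm (Window S Q E)) :
    Perm.sign (fiberwise hEF fun _ => g) = Perm.sign g ^ (Fintype.card S ^ (F \ E).card) := by
  simp [sign_fiberwise]

lemma sign_fiberwise_mulSingle [Fintype S] [DecidableEq S] [Fintype Q] [DecidableEq Q]
    {E F : Finset I} (hEF : E ⊆ F) (c : ↥(F \ E) → S) (g : Perm (Window S Q E)) :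
    Perm.sign (fiberwise hEF (Pi.mulSingle c g)) = Perm.sign g := by
  have h (c' : ↥(F \ E) → S) : Perm.sign ((Pi.mulSingle c g : _ → Perm (Window S Q E)) c') =
      (Pi.mulSingle c (Perm.sign g) : _ → ℤˣ) c' :=
    Pi.apply_mulSingle (fun _ => Perm.sign) (fun _ => map_one _) c g c'
  simp_rw [sign_fiberwise, h, Fintype.prod_pi_mulSingle']

end Shear

section LocalGroup

variable {I S Q : Type*} [DecidableEq I]

/-- The local permutations with reading and writing window `E`. -/
def localGroup (E : Finset I) : Subgroup (Perm (Config I S Q)) := (localHom E).range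

lemma localHom_mem_localGroup (E : Finset I) (g : Perm (Window S Q E)) :
    localHom E g ∈ localGroup E :=
  ⟨g, rfl⟩

lemma localGroup_mono : Monotone (localGroup : Finset I → Subgroup (Perm (Config I S Q))) := by
  rintro E F hEF _ ⟨g, rfl⟩
  exact ⟨fiberwise hEF fun _ => g,
    (shear_eq_shear_fiberwise hEF (φ := fun _ => g) (ψ := fun _ _ => g) fun _ => rfl).symm⟩

lemma finite_localGroup [Finite S] [Finite Q] (E : Finset I) :
    ((localGroup E : Subgroup (Perm (Config I S Q))) : Set (Perm (Config I S Q))).Finite :=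
  Set.finite_range _

lemma localHom_eq_of_window {E : Finset I} {π : Perm (Config I S Q)} {g : Perm (Window S Q E)}
    (hout : ∀ w, ∀ i ∉ E, (π w).1 i = w.1 i) (hin : ∀ w, window E (π w) = g (window E w)) :
    localHom E g = π := by
  ext1 w
  rw [localHom_apply, ← hin]
  exact glue_window_of_eqOn_compl (hout w)

lemma mem_localGroup_iff [Finite S] [Finite Q] {E : Finset I} {π : Perm (Config I S Q)} :
    π ∈ localGroup E ↔ (∀ w, ∀ i ∉ E, (π w).1 i = w.1 i) ∧
      ∀ w w', window E w = window E w' → window E (π w) = window E (π w') := by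
  constructor
  · rintro ⟨g, rfl⟩
    refine ⟨fun w i hi => glue_fst_of_notMem hi _ _, fun w w' h => ?_⟩
    simp [localHom_apply, h]
  rintro ⟨hout, hin⟩
  rcases isEmpty_or_nonempty (Config I S Q) with _ | ⟨⟨x, _⟩⟩
  · exact Subsingleton.elim 1 π ▸ one_mem _
  let f (b : Window S Q E) : Window S Q E := window E (π (glue E b x))
  have f_injective : Function.Injective f := by
    intro b b' h
    have hπ : π (glue E b x) = π (glue E b' x) := by
      rw [← glue_window E (π (glue E b x)), show window E (π (glue E b x)) = _ from h]
      refine glue_window_of_eqOn_compl fun i hi => ?_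
      simp [hout _ i hi, glue_fst_of_notMem hi]
    rw [← window_glue E b x, π.injective hπ, window_glue]
  exact ⟨ofBijective f (Finite.injective_iff_bijective.1 f_injective),
    localHom_eq_of_window hout fun w => hin _ _ (window_glue ..).symm⟩

end LocalGroup

section Control

/-- The function on `R` with value `g` on `C` and `1` elsewhere, as a homomorphism in `g`. It is
used to let a permutation act only when the surroundings lie in `C`. -/
noncomputable def control {R G : Type*} [Group G] (C : Set R) : G →* (R → G) :=
  (Set.mulIndicatorHom G C).comp (Pi.constMonoidHom R G)

open scoped Classical in
lemma control_apply {R G : Type*} [Group G] (C : Set R) (g : G) (r : R) :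
    control C g r = if r ∈ C then g else 1 :=
  Set.mulIndicator_apply ..

lemma control_inter_commutator {R G : Type*} [Group G] (C D : Set R) (g h : G) :
    control (C ∩ D) ⁅g, h⁆ = ⁅control C g, control D h⁆ := by
  ext r
  by_cases hC : r ∈ C <;> by_cases hD : r ∈ D <;>
    simp [control_apply, commutatorElement_def, hC, hD]

variable {I S Q : Type*}

/-- The tape contents outside `E` that agree with `a` on the cells of `D \ E`. -/
def cylinder (E D : Finset I) (a : I → S) : Set (Outside S E) :=
  {r | ∀ i : {i // i ∉ E}, i.1 ∈ D → r i = a i}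

lemma cylinder_empty (E : Finset I) (a : I → S) : cylinder E ∅ a = Set.univ := by
  simp [cylinder]

lemma outside_mem_cylinder {E D : Finset I} {a x : I → S} :
    outside E x ∈ cylinder E D a ↔ ∀ i ∈ D, i ∉ E → x i = a i := by
  simp only [cylinder, outside, Set.mem_ofPred_eq, Subtype.forall]
  grind

variable [DecidableEq I]

lemma outside_mem_cylinder_iff_restrict_eq {E F : Finset I} {a x : I → S} :
    outside E x ∈ cylinder E F a ↔ (F \ E).restrict x = (F \ E).restrict a := by
  simp only [outside_mem_cylinder, Finset.restrict_def, Subtype.forall, funext_iff,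
    Finset.mem_sdiff, and_imp]

lemma cylinder_insert (E D : Finset I) (x : I) (a : I → S) :
    cylinder E (insert x D) a = cylinder E D a ∩ cylinder E (insert x E) a := by
  ext r
  simp only [cylinder, Set.mem_inter_iff, Set.mem_ofPred_eq, Finset.mem_insert]
  grind

lemma cylinder_insert_of_mem {E : Finset I} {x : I} (hx : x ∈ E) (D : Finset I) (a : I → S) :
    cylinder E (insert x D) a = cylinder E D a := by
  ext r
  simp only [cylinder, Set.mem_ofPred_eq, Finset.mem_insert]
  grind

lemma shear_control_univ (E : Finset I) (g : Perm (Window S Q E)) :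
    shear E (control Set.univ g) = localHom E g :=
  congrArg (shear E) (funext fun r => by simp [control_apply])

lemma shear_control_cylinder [DecidableEq S] {E F : Finset I} (hEF : E ⊆ F) (a : I → S)
    (g : Perm (Window S Q E)) :
    shear E (control (cylinder E F a) g) =
      localHom F (fiberwise hEF (Pi.mulSingle ((F \ E).restrict a) g)) := by
  refine shear_eq_shear_fiberwise hEF (ψ := fun _ => Pi.mulSingle ((F \ E).restrict a) g)
    fun x => ?_
  simp only [control_apply, outside_mem_cylinder_iff_restrict_eq, Pi.mulSingle_apply]

lemma shear_control_swap [DecidableEq S] [DecidableEq Q] {E F : Finset I} (hEF : E ⊆ F)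
    (a : I → S) (p q : Window S Q E) :
    shear E (control (cylinder E F a) (swap p q)) =
      localHom F (swap (window F (glue E p a)) (window F (glue E q a))) := by
  rw [shear_control_cylinder hEF, fiberwise_mulSingle_swap]

end Control

section Generation

variable {I S Q : Type*} [DecidableEq I] {H : Subgroup (Perm (Config I S Q))}

/-- A commutator of a permutation controlled by `C` with one controlled by `D` is controlled by
`C ∩ D`, so a perfect group of permutations accepts one more control cell at a time. -/
lemma shear_control_mem_of_perfect {E : Finset I} {P : Subgroup (Perm (Window S Q E))}
    (hP : P ≤ ⁅P, P⁆) (hH : ∀ F : Finset I, F.card ≤ E.card + 1 → localGroup F ≤ H)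
    (D : Finset I) (a : I → S) {g : Perm (Window S Q E)} (hg : g ∈ P) :
    shear E (control (cylinder E D a) g) ∈ H := by
  classical
  induction D using Finset.induction_on generalizing g with
  | empty =>
    rw [cylinder_empty, shear_control_univ]
    exact hH E (Nat.le_succ _) (localHom_mem_localGroup E g)
  | insert x D _ ih =>
    suffices P ≤ H.comap ((shear E).comp (control (cylinder E (insert x D) a))) from this hg
    refine hP.trans (Subgroup.commutator_le.2 fun g₁ h₁ g₂ _ => ?_)
    have hD : shear E (control (cylinder E D a) g₁) ∈ H := ih h₁
    have hx : shear E (control (cylinder E (insert x E) a) g₂) ∈ H := by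
      rw [shear_control_cylinder (Finset.subset_insert x E)]
      exact hH _ (Finset.card_insert_le x E) (localHom_mem_localGroup _ _)
    rw [Subgroup.mem_comap, MonoidHom.comp_apply, cylinder_insert, control_inter_commutator,
      map_commutatorElement, commutatorElement_def]
    exact H.mul_mem (H.mul_mem (H.mul_mem hD hx) (H.inv_mem hD)) (H.inv_mem hx)

lemma shear_control_mul_control_insert_pow [DecidableEq S] {E D : Finset I} {x : I}
    (hx : x ∉ D) (a : I → S) (g : Perm (Window S Q E)) (m : ℕ) :
    shear E (control (cylinder E D a) g * control (cylinder E (insert x D) a) g ^ m) =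
      shear (insert x E) (control (cylinder (insert x E) D a)
        (fiberwise (Finset.subset_insert x E)
          ((fun _ => g) * Pi.mulSingle ((insert x E \ E).restrict a) g ^ m))) := by
  rw [shear_eq_shear_fiberwise (Finset.subset_insert x E) (ψ := control
    (cylinder (insert x E) D a) ((fun _ => g) * Pi.mulSingle ((insert x E \ E).restrict a) g ^ m))]
  · refine congrArg (shear _) (funext fun r => ?_)
    simp only [control_apply, apply_ite (fiberwise _), map_one]
  · intro z
    have hD : outside E z ∈ cylinder E D a ↔
        outside (insert x E) z ∈ cylinder (insert x E) D a := by
      simp only [outside_mem_cylinder]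
      grind
    have hx := outside_mem_cylinder_iff_restrict_eq (E := E) (F := insert x E) (a := a) (x := z)
    rw [cylinder_insert]
    by_cases h : outside (insert x E) z ∈ cylinder (insert x E) D a <;>
      by_cases h' : outside E z ∈ cylinder E (insert x E) a <;>
        simp [control_apply, Pi.mulSingle_apply, hD, h, h', ← hx]

lemma shear_control_mul_control_insert_pow_card_mem [Finite S] [Nontrivial S] [Finite Q]
    [Nonempty Q] {E D : Finset I} {x : I} (hE : E.card = 2) (hxE : x ∉ E) (hxD : x ∉ D)
    (hH : ∀ F : Finset I, F.card ≤ 4 → localGroup F ≤ H) (a : I → S) (g : Perm (Window S Q E)) :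
    shear E (control (cylinder E D a) g * control (cylinder E (insert x D) a) g ^ Nat.card S) ∈
      H := by
  classical
  have := Fintype.ofFinite S
  have := Fintype.ofFinite Q
  have card_insert : (insert x E).card = 3 := by rw [Finset.card_insert_of_notMem hxE, hE]
  have five_le_card : 5 ≤ Nat.card (Window S Q (insert x E)) := by
    have hS : 2 ^ 3 ≤ Nat.card S ^ 3 := Nat.pow_le_pow_left Finite.one_lt_card 3
    have hQ : 0 < Nat.card Q := Nat.card_pos
    rw [Nat.card_prod, Nat.card_fun, Nat.card_eq_fintype_card (α := ↥(insert x E)),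
      Fintype.card_coe, card_insert]
    nlinarith
  rw [shear_control_mul_control_insert_pow hxD]
  refine shear_control_mem_of_perfect (commutator_alternatingGroup_eq_self five_le_card).ge
    (fun F hF => hH F (by omega)) D a ?_
  have card_sdiff : (insert x E \ E).card = 1 := by
    rw [Finset.card_sdiff_of_subset (Finset.subset_insert x E), card_insert, hE]
  rw [Perm.mem_alternatingGroup, map_mul, map_mul, map_pow, map_pow, sign_fiberwise_const,
    sign_fiberwise_mulSingle, card_sdiff, pow_one, Nat.card_eq_fintype_card, ← mul_pow,
    Int.units_mul_self, one_pow]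

/-- If `|S|` is even, one more control cell makes a controlled transposition even; if `|S|` is
odd, a controlled transposition changes by an even permutation when a control cell is added. -/
lemma shear_control_mem [Infinite I] [Finite S] [Nontrivial S] [Finite Q] [Nonempty Q]
    {E : Finset I} (hE : E.card = 2) (hH : ∀ F : Finset I, F.card ≤ 4 → localGroup F ≤ H)
    (D : Finset I) (a : I → S) (g : Perm (Window S Q E)) :
    shear E (control (cylinder E D a) g) ∈ H := by
  classical
  suffices hswap : ∀ p q, shear E (control (cylinder E D a) (swap p q)) ∈ H by
    suffices ⊤ ≤ H.comap ((shear E).comp (control (cylinder E D a))) from this trivial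
    rw [← Perm.closure_isSwap, Subgroup.closure_le]
    rintro _ ⟨p, q, -, rfl⟩
    exact hswap p q
  intro p q
  have hsq : swap p q ^ 2 = 1 := by rw [sq, swap_mul_self]
  rcases Nat.even_or_odd' (Nat.card S) with ⟨m, hm | hm⟩
  · obtain ⟨x, hx⟩ := Infinite.exists_notMem_finset (D ∪ E)
    rw [Finset.mem_union, not_or] at hx
    have := shear_control_mul_control_insert_pow_card_mem hE hx.2 hx.1 hH a (swap p q)
    rwa [hm, ← map_pow, pow_mul, hsq, one_pow, map_one, mul_one] at this
  · induction D using Finset.induction_on with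
    | empty =>
      rw [cylinder_empty, shear_control_univ]
      exact hH E (by omega) (localHom_mem_localGroup E _)
    | insert x D hxD ih =>
      by_cases hxE : x ∈ E
      · rwa [cylinder_insert_of_mem hxE]
      have := shear_control_mul_control_insert_pow_card_mem hE hxE hxD hH a (swap p q)
      rwa [hm, ← map_pow, pow_succ, pow_mul, hsq, one_pow, one_mul, map_mul,
        H.mul_mem_cancel_left ih] at this

lemma localGroup_le_of_subsingleton [Subsingleton S] [Finite Q] (F : Finset I) :
    (localGroup F : Subgroup (Perm (Config I S Q))) ≤ localGroup ∅ := by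
  intro π _
  refine mem_localGroup_iff.2 ⟨fun _ _ _ => Subsingleton.elim _ _, fun w w' h => ?_⟩
  rw [show w = w' from Prod.ext (Subsingleton.elim _ _) (Prod.ext_iff.1 h).2]

lemma localHom_swap_window_mem [Infinite I] [Finite S] [Nontrivial S] [Finite Q] [Nonempty Q]
    [DecidableEq S] [DecidableEq Q] {E F : Finset I} (hEF : E ⊆ F) (hE : E.card = 2)
    (hH : ∀ F : Finset I, F.card ≤ 4 → localGroup F ≤ H) {w w' : Config I S Q}
    (hw : ∀ i ∉ E, w'.1 i = w.1 i) : localHom F (swap (window F w) (window F w')) ∈ H := by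
  have := shear_control_mem hE hH F w.1 (swap (window E w) (window E w'))
  rwa [shear_control_swap hEF, glue_window, glue_window_of_eqOn_compl hw] at this

theorem localGroup_le_of_card_le_four [Infinite I] [Finite S] [Finite Q]
    (hH : ∀ E : Finset I, E.card ≤ 4 → localGroup E ≤ H) (F : Finset I) : localGroup F ≤ H := by
  classical
  rcases isEmpty_or_nonempty Q with _ | _
  · exact fun π _ => Subsingleton.elim 1 π ▸ one_mem H
  rcases subsingleton_or_nontrivial S with _ | _
  · exact (localGroup_le_of_subsingleton F).trans (hH ∅ (by simp))
  obtain ⟨G, hFG, hG⟩ := Infinite.exists_superset_card_eq F (F.card + 2) (Nat.le_add_right _ 2)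
  have : Nonempty G := (Finset.card_pos.1 (by omega)).to_subtype
  refine (localGroup_mono hFG).trans ?_
  suffices H.comap (localHom G) = ⊤ by
    rintro _ ⟨g, rfl⟩
    exact (Subgroup.eq_top_iff' _).1 this g
  refine eq_top_of_swap_mem_of_agree_off fun i p q hpq => ?_
  obtain ⟨E, hiE, hEG, hE⟩ := Finset.exists_subsuperset_card_eq (n := 2)
    (Finset.singleton_subset_iff.2 i.2) (by simp) (by omega)
  let x : I → S := Classical.arbitrary _
  rw [Subgroup.mem_comap, ← window_glue G p x, ← window_glue G q x]
  refine localHom_swap_window_mem hEG hE hH fun j hj => ?_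
  by_cases hjG : j ∈ G
  · simpa [glue, hjG] using (hpq ⟨j, hjG⟩ (by grind)).symm
  · simp [glue, hjG]

end Generation

section PermuteCells

variable {I S Q : Type*}

/-- Moving the content of each cell `i` to the cell `ρ i`. -/
def permuteCells : Perm I →* Perm (Config I S Q) where
  toFun ρ := (ρ.arrowCongr (Equiv.refl S)).prodCongr (Equiv.refl Q)
  map_one' := rfl
  map_mul' _ _ := rfl

lemma permuteCells_apply (ρ : Perm I) (w : Config I S Q) :
    permuteCells ρ w = (w.1 ∘ ρ.symm, w.2) := rfl

lemma permuteCells_inv_apply (ρ : Perm I) (w : Config I S Q) :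
    (permuteCells ρ)⁻¹ w = (w.1 ∘ ρ, w.2) := rfl

variable [DecidableEq I]

lemma window_image_eq_iff {E : Finset I} (ρ : Perm I) {w w' : Config I S Q} :
    window (E.image ρ) w = window (E.image ρ) w' ↔
      window E ((permuteCells ρ)⁻¹ w) = window E ((permuteCells ρ)⁻¹ w') := by
  simp only [window, permuteCells_inv_apply, Prod.mk.injEq, funext_iff, Subtype.forall,
    Finset.restrict_def, Finset.forall_mem_image, Function.comp_apply]

lemma permuteCells_conj_mem_localGroup [Finite S] [Finite Q] {E : Finset I} (ρ : Perm I)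
    {π : Perm (Config I S Q)} (hπ : π ∈ localGroup E) :
    permuteCells ρ * π * (permuteCells ρ)⁻¹ ∈ localGroup (E.image ρ) := by
  obtain ⟨hout, hin⟩ := mem_localGroup_iff.1 hπ
  refine mem_localGroup_iff.2 ⟨fun w i hi => ?_, fun w w' h => ?_⟩
  · have hi' : ρ.symm i ∉ E := fun h => hi (Finset.mem_image.2 ⟨_, h, by simp⟩)
    simp only [Perm.mul_apply, permuteCells_apply, Function.comp_apply, hout _ _ hi',
      permuteCells_inv_apply, apply_symm_apply]
  · rw [window_image_eq_iff] at h ⊢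
    simpa only [← Perm.mul_apply, mul_assoc, inv_mul_cancel_left] using hin _ _ h

lemma permuteCells_swap_mem_localGroup [Finite S] [Finite Q] {E : Finset I} {i j : I}
    (hi : i ∈ E) (hj : j ∈ E) :
    permuteCells (swap i j) ∈ (localGroup E : Subgroup (Perm (Config I S Q))) := by
  refine mem_localGroup_iff.2 ⟨fun w l hl => ?_, fun w w' h => ?_⟩
  · simp [permuteCells_apply, swap_apply_of_ne_of_ne (a := i) (b := j) (x := l) (by grind)
      (by grind)]
  · simp only [window, permuteCells_apply, Prod.mk.injEq, funext_iff, Subtype.forall,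
      Finset.restrict_def] at h ⊢
    refine ⟨fun l hl => h.1 _ ?_, h.2⟩
    rw [symm_swap, swap_apply_def]
    grind

lemma exists_perm_image_subset {M : Subgroup (Perm I)} (hM : ∀ i j, Equiv.swap i j ∈ M)
    {E E₀ : Finset I} (hE : E.card ≤ E₀.card) : ∃ ρ ∈ M, E.image ρ ⊆ E₀ := by
  induction E using Finset.induction_on with
  | empty => exact ⟨1, M.one_mem, by simp⟩
  | insert x E hxE ih =>
    rw [Finset.card_insert_of_notMem hxE] at hE
    obtain ⟨ρ, hρ, hE₀⟩ := ih (by omega)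
    obtain ⟨y, hy, hyE⟩ := Finset.exists_mem_notMem_of_card_lt_card
      (Finset.card_image_le.trans_lt hE : (E.image ρ).card < E₀.card)
    refine ⟨swap (ρ x) y * ρ, M.mul_mem (hM _ _) hρ, ?_⟩
    intro z hz
    obtain ⟨u, hu, rfl⟩ := Finset.mem_image.1 hz
    rcases Finset.mem_insert.1 hu with rfl | hu
    · simpa
    · have hρu := Finset.mem_image_of_mem ρ hu
      rw [Perm.mul_apply, swap_apply_of_ne_of_ne]
      · exact hE₀ hρu
      · exact fun h => hxE (ρ.injective h ▸ hu)
      · exact fun h => hyE (h ▸ hρu)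

lemma localGroup_le_of_permuteCells_swap_mem [Finite S] [Finite Q]
    {H : Subgroup (Perm (Config I S Q))} (hswap : ∀ i j, permuteCells (swap i j) ∈ H)
    {E E₀ : Finset I} (h₀ : localGroup E₀ ≤ H) (hE : E.card ≤ E₀.card) : localGroup E ≤ H := by
  intro π hπ
  obtain ⟨ρ, hρ, hE₀⟩ := exists_perm_image_subset (M := H.comap permuteCells) hswap hE
  have := h₀ (localGroup_mono hE₀ (permuteCells_conj_mem_localGroup ρ hπ))
  rwa [H.mul_mem_cancel_right (H.inv_mem hρ), H.mul_mem_cancel_left hρ] at this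

end PermuteCells

section Translations

variable {A : Type*} [AddCommGroup A] [DecidableEq A]

lemma swap_mem_of_conj_mem_of_closure_eq_top {M : Subgroup (Perm A)} {Z : Set A}
    (hZ : AddSubgroup.closure Z = ⊤) (hM : ∀ z ∈ Z, swap 0 z ∈ M)
    (hconj : ∀ u, ∀ ρ ∈ M, Equiv.subRight u * ρ * (Equiv.subRight u)⁻¹ ∈ M) (i j : A) :
    swap i j ∈ M := by
  let B : AddSubgroup A :=
    { carrier := {u | ∀ v, swap v (v + u) ∈ M}
      zero_mem' := fun v => by rw [add_zero, swap_self]; exact M.one_mem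
      add_mem' := fun {a b} ha hb v => by
        have := hb (v + a)
        rw [add_assoc] at this
        exact SubmonoidClass.swap_mem_trans M (ha v) this
      neg_mem' := fun {a} ha v => by
        have := ha (v + -a)
        rwa [swap_comm, neg_add_cancel_right] at this }
  have hB : B = ⊤ := by
    rw [eq_top_iff, ← hZ, AddSubgroup.closure_le]
    intro z hz v
    have := hconj (-v) _ (hM z hz)
    rw [← swap_apply_apply] at this
    simpa [add_comm] using this
  have : j - i ∈ B := hB ▸ AddSubgroup.mem_top _
  simpa using this i

theorem localGroup_le_of_translation_invariant [Infinite A] {S Q : Type*} [Finite S] [Finite Q]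
    {H : Subgroup (Perm (Config A S Q))} {Z : Set A} (hZ : AddSubgroup.closure Z = ⊤)
    (hconj : ∀ u, ∀ π ∈ H,
      permuteCells (Equiv.subRight u) * π * (permuteCells (Equiv.subRight u))⁻¹ ∈ H)
    {E₀ : Finset A} (h₀ : localGroup E₀ ≤ H) (zero_mem : 0 ∈ E₀) (hZE₀ : Z ⊆ E₀)
    (hE₀ : 4 ≤ E₀.card) (F : Finset A) : localGroup F ≤ H := by
  have hswap := swap_mem_of_conj_mem_of_closure_eq_top (M := H.comap permuteCells) hZ
    (fun z hz => h₀ (permuteCells_swap_mem_localGroup zero_mem (hZE₀ hz)))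
    (fun u ρ hρ => by simpa using hconj u _ hρ)
  exact localGroup_le_of_card_le_four
    (fun E hE => localGroup_le_of_permuteCells_swap_mem hswap h₀ (hE.trans hE₀)) F

end Translations

section TuringMachine

/-- The configurations of a machine with a head, as seen from the head. -/
abbrev View (d n k : ℕ) : Type := Config (V d) (Fin n) (Fin k)

variable {d n k : ℕ}

/-- The configuration with tape `x` and no head. -/
def headless (x : V d → Fin n) : X d n k :=
  ⟨(x, fun _ => none), by simp [headOk]⟩

/-- The configuration with the head at `v`, where `w` is the configuration as seen from `v`. -/
def headAt (v : V d) (w : View d n k) : X d n k :=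
  ⟨(fun t => w.1 (t - v), fun t => if t = v then some w.2 else none), by
    intro a b ha hb
    rw [Option.isSome_ite] at ha hb
    rw [ha, hb]⟩

lemma headAt_head_eq_some_iff {v v' : V d} {q : Fin k} {w : View d n k} :
    (headAt v w).1.2 v' = some q ↔ v' = v ∧ w.2 = q := by
  simp [headAt]

lemma headAt_inj {v v' : V d} {w w' : View d n k} :
    headAt v w = headAt v' w' ↔ v = v' ∧ w = w' := by
  refine ⟨fun h => ?_, by rintro ⟨rfl, rfl⟩; rfl⟩
  obtain ⟨rfl, hstate⟩ := headAt_head_eq_some_iff.1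
    (h ▸ headAt_head_eq_some_iff.2 ⟨rfl, rfl⟩ : (headAt v' w').1.2 v = some w.2)
  refine ⟨rfl, Prod.ext (funext fun t => ?_) hstate.symm⟩
  simpa [headAt] using congrArg (fun c : X d n k => c.1.1 (t + v)) h

lemma headless_eq_of_forall_eq_none {c : X d n k} (h : ∀ v, c.1.2 v = none) :
    headless c.1.1 = c :=
  Subtype.ext (Prod.ext rfl (funext fun v => (h v).symm))

lemma headAt_eq_of_head_eq_some {c : X d n k} {v : V d} {q : Fin k} (h : c.1.2 v = some q) :
    headAt v (fun t => c.1.1 (t + v), q) = c := by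
  refine Subtype.ext (Prod.ext (funext fun t => by simp [headAt]) (funext fun t => ?_))
  rcases eq_or_ne t v with rfl | htv
  · simp [headAt, h]
  · have : c.1.2 t = none := by
      rw [← Option.not_isSome_iff_eq_none]
      exact fun ht => htv (c.2 t v ht (by simp [h]))
    simp [headAt, htv, this]

lemma sumElim_headless_headAt_bijective :
    Function.Bijective (Sum.elim headless fun p : V d × View d n k => headAt p.1 p.2) := by
  constructor
  · have headless_injective : Function.Injective (headless : _ → X d n k) := fun x x' h =>
      congrArg (fun c : X d n k => c.1.1) h
    refine headless_injective.sumElim (fun p p' h => Prod.ext_iff.2 (headAt_inj.1 h)) ?_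
    rintro x ⟨v, w⟩ h
    simpa [headless, headAt] using congrArg (fun c : X d n k => c.1.2 v) h
  · intro c
    by_cases h : ∃ v q, c.1.2 v = some q
    · obtain ⟨v, q, h⟩ := h
      exact ⟨Sum.inr (v, _), headAt_eq_of_head_eq_some h⟩
    · refine ⟨Sum.inl c.1.1, headless_eq_of_forall_eq_none fun v => ?_⟩
      exact Option.eq_none_iff_forall_ne_some.2 fun q hq => h ⟨v, q, hq⟩

/-- Reassembling a configuration from its head position and its appearance from the head. -/
noncomputable def placeHead :
    (V d → Fin n) ⊕ (V d × View d n k) ≃ X d n k :=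
  Equiv.ofBijective _ sumElim_headless_headAt_bijective

@[simp] lemma placeHead_inl (x : V d → Fin n) : (placeHead (Sum.inl x) : X d n k) = headless x :=
  rfl

@[simp] lemma placeHead_inr (p : V d × View d n k) :
    placeHead (Sum.inr p) = headAt p.1 p.2 :=
  rfl

lemma exists_headless_eq_or_exists_headAt_eq (c : X d n k) :
    (∃ x, headless x = c) ∨ ∃ v w, headAt v w = c := by
  obtain ⟨x | ⟨v, w⟩, rfl⟩ := placeHead.surjective c
  exacts [Or.inl ⟨x, rfl⟩, Or.inr ⟨v, w, rfl⟩]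

/-- A permutation of the configurations seen from the head, acting wherever the head is. -/
noncomputable def atHead : Perm (View d n k) →* Perm (X d n k) where
  toFun π := placeHead.permCongr (sumCongr (Equiv.refl _) (prodCongr (Equiv.refl _) π))
  map_one' := by
    ext1 c
    simp [permCongr_apply]
  map_mul' π π' := by
    ext1 c
    simp [permCongr_apply, Prod.map_comp_map]

lemma atHead_placeHead (π : Perm (View d n k))
    (s : (V d → Fin n) ⊕ (V d × View d n k)) :
    atHead π (placeHead s) = placeHead (Sum.map id (Prod.map id π) s) := by
  simp [atHead, permCongr_apply]

lemma atHead_headless (π : Perm (View d n k)) (x : V d → Fin n) :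
    atHead π (headless x) = headless x :=
  atHead_placeHead π (Sum.inl x)

lemma atHead_headAt (π : Perm (View d n k)) (v : V d)
    (w : View d n k) : atHead π (headAt v w) = headAt v (π w) :=
  atHead_placeHead π (Sum.inr (v, w))

/-- The machine `T_u` moving the head by `u`. -/
def headShift (u : V d) : Perm (X d n k) where
  toFun c := ⟨(c.1.1, fun t => c.1.2 (t - u)), fun _ _ ha hb =>
    sub_left_injective (c.2 _ _ ha hb)⟩
  invFun c := ⟨(c.1.1, fun t => c.1.2 (t + u)), fun _ _ ha hb =>
    add_left_injective u (c.2 _ _ ha hb)⟩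
  left_inv c := by simp
  right_inv c := by simp

lemma headShift_zero : (headShift 0 : Perm (X d n k)) = 1 := by
  ext1 c
  simp [headShift]

lemma headShift_add (u v : V d) :
    (headShift (u + v) : Perm (X d n k)) = headShift u * headShift v := by
  ext1 c
  simp [headShift, sub_sub]

lemma headShift_neg (u : V d) : (headShift (-u) : Perm (X d n k)) = (headShift u)⁻¹ := by
  rw [eq_inv_iff_mul_eq_one, ← headShift_add, neg_add_cancel, headShift_zero]

lemma headShift_mem_of_closure_eq_top {G : Subgroup (Perm (X d n k))} {Z : Set (V d)}
    (hZ : AddSubgroup.closure Z = ⊤) (hG : ∀ z ∈ Z, headShift z ∈ G) (u : V d) :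
    headShift u ∈ G := by
  have hu : u ∈ AddSubgroup.closure Z := hZ ▸ AddSubgroup.mem_top u
  induction hu using AddSubgroup.closure_induction with
  | mem z hz => exact hG z hz
  | zero => exact headShift_zero (d := d) ▸ G.one_mem
  | add a b _ _ ha hb => exact headShift_add a b ▸ G.mul_mem ha hb
  | neg a _ ha => exact headShift_neg a ▸ G.inv_mem ha

lemma Shiftset_eq_range : Shiftset d n k = Set.range headShift := by
  ext π
  refine ⟨fun ⟨u, hu⟩ => ⟨u, ?_⟩, ?_⟩
  · ext1 c
    exact Subtype.ext (Prod.ext (hu c).1.symm (funext fun t => ((hu c).2 t).symm))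
  · rintro ⟨u, rfl⟩
    exact ⟨u, fun _ => ⟨rfl, fun _ => rfl⟩⟩

lemma headShift_headless (u : V d) (x : V d → Fin n) :
    headShift u (headless x : X d n k) = headless x := rfl

lemma headShift_headAt (u v : V d) (w : View d n k) :
    headShift u (headAt v w) = headAt (v + u) (permuteCells (Equiv.subRight u) w) := by
  refine Subtype.ext (Prod.ext (funext fun t => ?_) (funext fun t => ?_))
  · change w.1 (t - v) = w.1 (t - (v + u) + u)
    abel_nf
  · simp [headShift, headAt, permuteCells_apply, sub_eq_iff_eq_add]

lemma headShift_conj_atHead (u : V d) (π : Perm (View d n k)) :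
    headShift u * atHead π * (headShift u)⁻¹ =
      atHead (permuteCells (Equiv.subRight u) * π * (permuteCells (Equiv.subRight u))⁻¹) := by
  rw [mul_inv_eq_iff_eq_mul]
  ext1 c
  rcases exists_headless_eq_or_exists_headAt_eq c with ⟨x, rfl⟩ | ⟨v, w, rfl⟩
  · simp only [Perm.mul_apply, atHead_headless, headShift_headless]
  · simp only [Perm.mul_apply, atHead_headAt, headShift_headAt, ← Perm.mul_apply _⁻¹,
      inv_mul_cancel, Perm.one_apply]

lemma isTM_atHead {E : Finset (V d)} {π : Perm (View d n k)}
    (hπ : π ∈ localGroup E) : IsTM (atHead π) := by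
  obtain ⟨hout, hin⟩ := mem_localGroup_iff.1 hπ
  refine ⟨E, E, fun x q => ((π (x, q)).1, (π (x, q)).2, 0), fun x x' q hx => ?_, fun c hc => ?_,
    fun c v q hc => ?_⟩
  · have := hin (x, q) (x', q) (Prod.ext (funext fun i => hx i i.2) rfl)
    simp only [window, Prod.mk.injEq, funext_iff, Subtype.forall, Finset.restrict_def] at this
    exact ⟨this.1, by simp only [this.2]⟩
  · rw [← headless_eq_of_forall_eq_none hc, atHead_headless]
  · rw [← headAt_eq_of_head_eq_some hc, atHead_headAt]
    refine ⟨fun t => ?_, fun t => by simp [headAt]⟩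
    by_cases ht : t - v ∈ E
    · simp [headAt, ht]
    · simpa [headAt, ht] using hout (fun t => c.1.1 (t + v), q) _ ht

lemma atHead_mem_LPset {E : Finset (V d)} {π : Perm (View d n k)}
    (hπ : π ∈ localGroup E) : atHead π ∈ LPset d n k := by
  refine ⟨⟨isTM_atHead hπ, ?_⟩, fun c v => ?_⟩
  · rw [← Perm.inv_def, ← map_inv]
    exact isTM_atHead (inv_mem hπ)
  · rcases exists_headless_eq_or_exists_headAt_eq c with ⟨x, rfl⟩ | ⟨v', w, rfl⟩
    · rw [atHead_headless]
    · rw [atHead_headAt]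
      simp only [headAt]
      split_ifs <;> rfl

lemma exists_local_rule {T : X d n k → X d n k} (hT : IsTM T)
    (hstill : ∀ c v, ((T c).1.2 v).isSome = (c.1.2 v).isSome) :
    ∃ (E : Finset (V d)) (P : View d n k → View d n k),
      (∀ w, ∀ i ∉ E, (P w).1 i = w.1 i) ∧
      (∀ w w', window E w = window E w' → window E (P w) = window E (P w')) ∧
      (∀ x, T (headless x) = headless x) ∧ ∀ v w, T (headAt v w) = headAt v (P w) := by
  obtain ⟨F, F', f, hf, hnone, hhead⟩ := hT
  let P (w : View d n k) : View d n k :=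
    (fun t => if t ∈ F' then (f w.1 w.2).1 t else w.1 t, (f w.1 w.2).2.1)
  refine ⟨F ∪ F', P, fun w i hi => ?_, fun w w' h => ?_, fun x => hnone _ fun _ => rfl,
    fun v w => ?_⟩
  · simp [P, (Finset.notMem_union.1 hi).2]
  · simp only [window, Prod.mk.injEq, funext_iff, Subtype.forall, Finset.restrict_def] at h ⊢
    obtain ⟨htape, hstate⟩ := h
    obtain ⟨hwrite, hrest⟩ := hf w.1 w'.1 w.2 fun i hi => htape i (Finset.mem_union_left _ hi)
    rw [hstate] at hwrite hrest
    refine ⟨fun i hi => ?_, by simp [P, hstate, hrest]⟩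
    by_cases hi' : i ∈ F'
    · simp [P, hi', hstate, hwrite i hi']
    · simp [P, hi', htape i hi]
  · have hv : (headAt v w).1.2 v = some w.2 := headAt_head_eq_some_iff.2 ⟨rfl, rfl⟩
    obtain ⟨htape, hmove⟩ := hhead _ v w.2 hv
    have hw : (fun u => (headAt v w).1.1 (u + v)) = w.1 := funext fun u => by simp [headAt]
    rw [hw] at htape hmove
    have move_eq_zero : v = v + (f w.1 w.2).2.2 := by
      have := hstill (headAt v w) v
      rw [hmove, hv] at this
      simpa only [Option.isSome_some, Option.isSome_ite] using this
    refine Subtype.ext (Prod.ext (funext fun t => ?_) (funext fun t => ?_))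
    · rw [htape t]; rfl
    · rw [hmove t, ← move_eq_zero]; rfl

lemma exists_atHead_eq_of_mem_LPset {π : Perm (X d n k)} (hπ : π ∈ LPset d n k) :
    ∃ E, ∃ ρ ∈ localGroup E, atHead ρ = π := by
  obtain ⟨⟨hTM, -⟩, hstill⟩ := hπ
  obtain ⟨E, P, hout, hin, hnone, hP⟩ := exists_local_rule hTM hstill
  have P_bijective : Function.Bijective P := by
    refine ⟨fun w w' h => ?_, fun w => ?_⟩
    · have : π (headAt 0 w) = π (headAt 0 w') := by rw [hP, hP, h]
      exact (headAt_inj.1 (π.injective this)).2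
    · rcases exists_headless_eq_or_exists_headAt_eq (π.symm (headAt 0 w))
        with ⟨x, hx⟩ | ⟨v, w', hw'⟩
      · have := congrArg (fun c : X d n k => c.1.2 0) (hnone x ▸ (symm_apply_eq π).1 hx.symm)
        simp [headless, headAt] at this
      · have := (symm_apply_eq π).1 hw'.symm
        rw [hP] at this
        exact ⟨w', (headAt_inj.1 this).2.symm⟩
  refine ⟨E, ofBijective P P_bijective, mem_localGroup_iff.2 ⟨hout, hin⟩, ?_⟩
  ext1 c
  rcases exists_headless_eq_or_exists_headAt_eq c with ⟨x, rfl⟩ | ⟨v, w, rfl⟩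
  · rw [atHead_headless, hnone]
  · rw [atHead_headAt, hP, ofBijective_apply]

theorem OBgrp_le [Nonempty (Fin d)] {G : Subgroup (Perm (X d n k))} {Z : Set (V d)}
    (hZ : AddSubgroup.closure Z = ⊤) (hG : ∀ z ∈ Z, headShift z ∈ G) {E₀ : Finset (V d)}
    (h₀ : localGroup E₀ ≤ G.comap atHead) (zero_mem : 0 ∈ E₀) (hZE₀ : Z ⊆ E₀)
    (hE₀ : 4 ≤ E₀.card) : OBgrp d n k ≤ G := by
  have shift_mem : ∀ u, headShift u ∈ G := headShift_mem_of_closure_eq_top hZ hG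
  have local_le : ∀ E, localGroup E ≤ G.comap atHead := by
    refine localGroup_le_of_translation_invariant hZ (fun u π hπ => ?_) h₀ zero_mem hZE₀ hE₀
    rw [Subgroup.mem_comap, ← headShift_conj_atHead]
    exact G.mul_mem (G.mul_mem (shift_mem u) hπ) (G.inv_mem (shift_mem u))
  refine (Subgroup.closure_le G).2 (Set.union_subset ?_ fun π hπ => ?_)
  · rw [Shiftset_eq_range]
    exact Set.range_subset_iff.2 shift_mem
  · obtain ⟨E, ρ, hρ, rfl⟩ := exists_atHead_eq_of_mem_LPset hπ
    exact local_le E hρ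

end TuringMachine

end ObliviousTM

open ObliviousTM in
/-- The group `OB(ℤ^d,n,k)` of oblivious Turing machines is finitely generated. -/
theorem ob_finitelyGenerated (d n k : ℕ) (hd : 1 ≤ d) (hn : 1 ≤ n) (hk : 1 ≤ k) :
    (OBgrp d n k).FG := by
  have : Nonempty (Fin d) := ⟨⟨0, hd⟩⟩
  obtain ⟨Z, hZ⟩ : ∃ Z : Finset (V d), AddSubgroup.closure (Z : Set (V d)) = ⊤ :=
    AddGroup.fg_def.1 inferInstance
  obtain ⟨E₀, hE₀, card_E₀⟩ := Infinite.exists_superset_card_eq (insert 0 Z)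
    ((insert 0 Z).card + 4) (Nat.le_add_right _ 4)
  obtain ⟨zero_mem, hZE₀⟩ := Finset.insert_subset_iff.1 hE₀
  let locals : Subgroup (Equiv.Perm (View d n k)) := localGroup E₀
  refine (Subgroup.fg_iff _).2 ⟨headShift '' Z ∪ atHead '' locals, le_antisymm ?_ ?_,
    (Z.finite_toSet.image _).union ((finite_localGroup E₀).image _)⟩
  · refine Subgroup.closure_mono (Set.union_subset_union ?_ ?_)
    · exact Shiftset_eq_range ▸ Set.image_subset_range _ _
    · exact Set.image_subset_iff.2 fun ρ hρ => atHead_mem_LPset hρ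
  · exact OBgrp_le hZ (fun z hz => Subgroup.subset_closure (.inl ⟨z, hz, rfl⟩))
      (fun ρ hρ => Subgroup.subset_closure (.inr ⟨ρ, hρ, rfl⟩)) zero_mem hZE₀ (by omega)
end

section
/- For all d, n, k ≥ 1, RFA(ℤ^d,n,k) ∩ LP(ℤ^d,n,k) = SP(ℤ^d,n,k), and RFA(ℤ^d,n,k) ∩ OB(ℤ^d,n,k) = ⟨SP(ℤ^d,n,k), Shift(ℤ^d,n,k)⟩. -/
open Function

/-!
Every element of `OB` translates the head by one constant vector, whatever the tape and the state
are, because shifts and local permutations do and this passes to products and inverses. The vector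
is `0` on `LP`, so an element of `RFA ∩ LP` never moves the head and is a state-permutation; an
element of `RFA ∩ OB` becomes a state-permutation once its translation is undone by a shift. As the
groups are defined by generators, this needs Turing machines to be closed under composition, which
holds because a local rule has only finitely many different moves.
-/

section LocalRules

variable {d n k : ℕ}

/-- The tape of `c` as seen by a head at `v`. -/
def view (c : X d n k) (v : V d) : V d → Fin n := fun t => c.val.1 (t + v)

lemma view_add (c : X d n k) (v u : V d) :
    view c (v + u) = fun t => view c v (t + u) :=
  funext fun t => by simp only [view, add_assoc, add_comm u v]

lemma head_eq_ite {c : X d n k} {v : V d} {q : Fin k} (h : c.val.2 v = some q) (t : V d) :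
    c.val.2 t = if t = v then some q else none := by
  split_ifs with htv
  · rw [htv, h]
  · rw [← Option.not_isSome_iff_eq_none]
    exact fun ht => htv (c.2 t v ht (by simp [h]))

/-- A rule sending the tape seen from the head and the state to the whole new tape (still seen
from the old position of the head), the new state and the move of the head. -/
abbrev Rule (d n k : ℕ) : Type :=
  (V d → Fin n) → Fin k → (V d → Fin n) × Fin k × V d

/-- The rule `f` reads and writes inside the window `W` only. Unlike in `DefinedBy`, one window
serves for both purposes, and `f` itself copies the tape outside of it. -/
structure Rule.LocalOn (f : Rule d n k) (W : Set (V d)) : Prop where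
  write_eqOn : ∀ ⦃x x'⦄, Set.EqOn x x' W → ∀ q, Set.EqOn (f x q).1 (f x' q).1 W
  move_eq : ∀ ⦃x x'⦄, Set.EqOn x x' W → ∀ q, (f x q).2 = (f x' q).2
  write_eq_of_notMem : ∀ x q, ∀ t ∉ W, (f x q).1 t = x t

/-- `T` applies the rule `f` at the position of the head. -/
structure Rule.Defines (f : Rule d n k) (T : X d n k → X d n k) : Prop where
  fixed : ∀ c : X d n k, (∀ v, c.val.2 v = none) → T c = c
  view_eq : ∀ ⦃c : X d n k⦄ ⦃v q⦄, c.val.2 v = some q → view (T c) v = (f (view c v) q).1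
  head_eq : ∀ ⦃c : X d n k⦄ ⦃v q⦄, c.val.2 v = some q →
    (T c).val.2 (v + (f (view c v) q).2.2) = some (f (view c v) q).2.1

namespace Rule

variable {f g : Rule d n k} {W : Set (V d)} {S T : X d n k → X d n k}

lemma LocalOn.mono (h : f.LocalOn W) {W' : Set (V d)} (hW : W ⊆ W') : f.LocalOn W' where
  write_eqOn x x' hx q t ht := by
    by_cases htW : t ∈ W
    · exact h.write_eqOn (hx.mono hW) q htW
    · rw [h.write_eq_of_notMem x q t htW, h.write_eq_of_notMem x' q t htW, hx ht]
  move_eq _ _ hx q := h.move_eq (hx.mono hW) q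
  write_eq_of_notMem x q t ht := h.write_eq_of_notMem x q t fun htW => ht (hW htW)

lemma LocalOn.finite_range_move (h : f.LocalOn W) (hW : W.Finite) :
    (Set.range fun p : (V d → Fin n) × Fin k => (f p.1 p.2).2.2).Finite := by
  have := hW.to_subtype
  let restrict : (V d → Fin n) × Fin k → (W → Fin n) × Fin k := Prod.map W.domRestrict id
  have hfactors : (fun p : (V d → Fin n) × Fin k => (f p.1 p.2).2.2).FactorsThrough restrict := by
    rintro ⟨x, q⟩ ⟨x', q'⟩ hxq
    obtain ⟨hx, rfl⟩ : W.domRestrict x = W.domRestrict x' ∧ q = q' := Prod.ext_iff.mp hxq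
    exact congrArg Prod.snd (h.move_eq (Set.domRestrict_eq_domRestrict_iff.mp hx) q)
  rw [← hfactors.extend_comp fun _ => 0]
  exact (Set.finite_range _).subset (Set.range_comp_subset_range _ _)

/-- The rule of the composite machine: apply `f`, then apply `g` at the new position of the
head. -/
def comp (g f : Rule d n k) : Rule d n k := fun x q =>
  let r := f x q
  let r' := g (fun t => r.1 (t + r.2.2)) r.2.1
  (fun t => r'.1 (t - r.2.2), r'.2.1, r.2.2 + r'.2.2)

open scoped Pointwise in
lemma LocalOn.comp {W' U : Set (V d)} (hg : g.LocalOn W') (hf : f.LocalOn W)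
    (hU : ∀ x q, (f x q).2.2 ∈ U) : (g.comp f).LocalOn (W ∪ (W' + U)) := by
  have hf' : f.LocalOn (W ∪ (W' + U)) := hf.mono Set.subset_union_left
  have hg' (x q) : g.LocalOn {t | t + (f x q).2.2 ∈ W ∪ (W' + U)} :=
    hg.mono fun t ht => Or.inr (Set.add_mem_add ht (hU x q))
  refine ⟨fun x x' hx q t ht => ?_, fun x x' hx q => ?_, fun x q t ht => ?_⟩
  · simp only [Rule.comp, ← hf'.move_eq hx q]
    exact (hg' x q).write_eqOn (fun s hs => hf'.write_eqOn hx q hs) _ (by simpa using ht)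
  · simp only [Rule.comp, ← hf'.move_eq hx q]
    rw [(hg' x q).move_eq fun s hs => hf'.write_eqOn hx q hs]
  · simp only [Rule.comp]
    rw [(hg' x q).write_eq_of_notMem _ _ _ (by simpa using ht), sub_add_cancel,
      hf'.write_eq_of_notMem x q t ht]

lemma Defines.comp (hg : g.Defines S) (hf : f.Defines T) : (g.comp f).Defines (S ∘ T) where
  fixed c hc := by rw [Function.comp_apply, hf.fixed c hc, hg.fixed c hc]
  view_eq c v q hc := by
    have hview := hg.view_eq (hf.head_eq hc)
    rw [view_add, view_add, hf.view_eq hc] at hview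
    funext t
    simpa [Rule.comp] using congrFun hview (t - (f (view c v) q).2.2)
  head_eq c v q hc := by
    have hhead := hg.head_eq (hf.head_eq hc)
    rw [view_add, hf.view_eq hc, add_assoc] at hhead
    exact hhead

end Rule

lemma isTM_iff {T : X d n k → X d n k} :
    IsTM T ↔ ∃ W : Set (V d), W.Finite ∧ ∃ f : Rule d n k, f.LocalOn W ∧ f.Defines T := by
  classical
  constructor
  · rintro ⟨F, F', f, hlocal, hfixed, hstep⟩
    refine ⟨F ∪ F', F.finite_toSet.union F'.finite_toSet,
      fun x q => (F'.piecewise (f x q).1 x, (f x q).2), ⟨?_, ?_, ?_⟩, ⟨hfixed, ?_, ?_⟩⟩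
    · intro x x' hx q t ht
      by_cases htF' : t ∈ F'
      · simpa [htF'] using (hlocal x x' q fun v hv => hx (Or.inl hv)).1 t htF'
      · simpa [htF'] using hx ht
    · exact fun x x' hx q => (hlocal x x' q fun v hv => hx (Or.inl hv)).2
    · exact fun x q t ht => F'.piecewise_eq_of_notMem _ _ fun htF' => ht (Or.inr htF')
    · intro c v q hc
      funext t
      simp only [view, (hstep c v q hc).1, add_sub_cancel_right]
      rfl
    · intro c v q hc
      rw [(hstep c v q hc).2]
      exact if_pos rfl
  · rintro ⟨W, hW, f, hlocal, hdefines⟩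
    refine ⟨hW.toFinset, hW.toFinset, f, fun x x' q hx => ?_, hdefines.fixed,
      fun c v q hc => ⟨fun t => ?_, head_eq_ite (hdefines.head_eq hc)⟩⟩
    · have hxW : Set.EqOn x x' W := fun v hv => hx v (hW.mem_toFinset.mpr hv)
      exact ⟨fun v hv => hlocal.write_eqOn hxW q (hW.mem_toFinset.mp hv), hlocal.move_eq hxW q⟩
    · have ht : (T c).val.1 t = (f (view c v) q).1 (t - v) := by
        simpa [view] using congrFun (hdefines.view_eq hc) (t - v)
      rw [ht]
      split_ifs with htW
      · rfl
      · rw [hlocal.write_eq_of_notMem _ _ _ (mt hW.mem_toFinset.mpr htW), view, sub_add_cancel]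

lemma IsTM.comp {S T : X d n k → X d n k} (hS : IsTM S) (hT : IsTM T) : IsTM (S ∘ T) := by
  obtain ⟨W', hW', g, hg, hgS⟩ := isTM_iff.mp hS
  obtain ⟨W, hW, f, hf, hfT⟩ := isTM_iff.mp hT
  exact isTM_iff.mpr ⟨_, hW.union (hW'.add (hf.finite_range_move hW)), g.comp f,
    hg.comp hf fun x q => ⟨(x, q), rfl⟩, hgS.comp hfT⟩

end LocalRules

section Groups

variable {d n k : ℕ}

/-- The machine `T_u` moving the head by `u`. -/
def shift (u : V d) : Equiv.Perm (X d n k) where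
  toFun c := ⟨(c.val.1, fun t => c.val.2 (t - u)),
    fun _ _ hs ht => sub_left_injective (c.2 _ _ hs ht)⟩
  invFun c := ⟨(c.val.1, fun t => c.val.2 (t - -u)),
    fun _ _ hs ht => sub_left_injective (c.2 _ _ hs ht)⟩
  left_inv c := by simp
  right_inv c := by simp

lemma Shiftset_eq_range_shift : Shiftset d n k = Set.range shift := by
  refine Set.ext fun π => ⟨?_, ?_⟩
  · rintro ⟨u, hu⟩
    exact ⟨u, Equiv.ext fun c => Subtype.ext
      (Prod.ext (hu c).1.symm (funext fun t => ((hu c).2 t).symm))⟩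
  · rintro ⟨u, rfl⟩
    exact ⟨u, fun _ => ⟨rfl, fun _ => rfl⟩⟩

lemma shift_mem_Shiftgrp (u : V d) : shift u ∈ Shiftgrp d n k :=
  Subgroup.subset_closure (Shiftset_eq_range_shift ▸ Set.mem_range_self u)

lemma shift_zero : (shift 0 : Equiv.Perm (X d n k)) = 1 :=
  Equiv.ext fun c => by simp [shift]

lemma shift_mem_RTMset (u : V d) : shift u ∈ RTMset d n k := by
  have isTM_shift (w : V d) : IsTM (shift w : Equiv.Perm (X d n k)) := by
    refine isTM_iff.mpr ⟨∅, Set.finite_empty, fun x q => (x, q, w),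
      ⟨fun _ _ _ _ => Set.eqOn_empty _ _, fun _ _ _ _ => rfl, fun _ _ _ _ => rfl⟩,
      ⟨fun c hc => ?_, fun _ _ _ _ => rfl, fun c v q hc => ?_⟩⟩
    · exact Subtype.ext (Prod.ext rfl (funext fun t => (hc _).trans (hc t).symm))
    · simpa [shift] using hc
  exact ⟨isTM_shift u, isTM_shift (-u)⟩

lemma mem_RTMset_of_mem_RTMgrp {π : Equiv.Perm (X d n k)} (h : π ∈ RTMgrp d n k) :
    π ∈ RTMset d n k := by
  induction h using Subgroup.closure_induction with
  | mem _ h => exact h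
  | one => exact shift_zero ▸ shift_mem_RTMset 0
  | mul _ _ _ _ ha hb => exact ⟨ha.1.comp hb.1, hb.2.comp ha.2⟩
  | inv _ _ ha => exact ⟨ha.2, ha.1⟩

lemma tape_eq_of_mem_RFAgrp {π : Equiv.Perm (X d n k)} (h : π ∈ RFAgrp d n k) (c : X d n k) :
    (π c).val.1 = c.val.1 := by
  induction h using Subgroup.closure_induction generalizing c with
  | mem _ h => exact h.2 c
  | one => rfl
  | mul a b _ _ ha hb => exact (ha (b c)).trans (hb c)
  | inv a _ ha => simpa using (ha (a⁻¹ c)).symm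

lemma mem_RFAset_of_mem_RFAgrp {π : Equiv.Perm (X d n k)} (h : π ∈ RFAgrp d n k) :
    π ∈ RFAset d n k :=
  have RFAgrp_le_RTMgrp : RFAgrp d n k ≤ RTMgrp d n k := Subgroup.closure_mono fun _ => And.left
  ⟨mem_RTMset_of_mem_RTMgrp (RFAgrp_le_RTMgrp h), tape_eq_of_mem_RFAgrp h⟩

lemma SPgrp_le_RFAgrp : SPgrp d n k ≤ RFAgrp d n k :=
  Subgroup.closure_mono fun _ h => ⟨h.1, h.2.1⟩

lemma SPgrp_le_LPgrp : SPgrp d n k ≤ LPgrp d n k :=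
  Subgroup.closure_mono fun _ h => ⟨h.1, h.2.2⟩

lemma Shiftgrp_le_RFAgrp : Shiftgrp d n k ≤ RFAgrp d n k := by
  refine Subgroup.closure_mono ?_
  rw [Shiftset_eq_range_shift]
  rintro _ ⟨u, rfl⟩
  exact ⟨shift_mem_RTMset u, fun _ => rfl⟩

lemma OBgrp_eq_sup : OBgrp d n k = Shiftgrp d n k ⊔ LPgrp d n k :=
  Subgroup.closure_union _ _

end Groups

section HeadTranslation

variable {d n k : ℕ}

/-- `π` moves the head by `u`, independently of the tape and the state. -/
def TranslatesHead (u : V d) (π : Equiv.Perm (X d n k)) : Prop :=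
  ∀ (c : X d n k) (v : V d), ((π c).val.2 v).isSome = (c.val.2 (v - u)).isSome

lemma translatesHead_shift (u : V d) :
    TranslatesHead u (shift u : Equiv.Perm (X d n k)) :=
  fun _ _ => rfl

lemma TranslatesHead.mul {u w : V d} {π ρ : Equiv.Perm (X d n k)}
    (hπ : TranslatesHead u π) (hρ : TranslatesHead w ρ) : TranslatesHead (u + w) (π * ρ) :=
  fun c v => by rw [Equiv.Perm.mul_apply, hπ, hρ, sub_sub]

lemma TranslatesHead.inv {u : V d} {π : Equiv.Perm (X d n k)} (hπ : TranslatesHead u π) :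
    TranslatesHead (-u) π⁻¹ :=
  fun c v => by simpa using (hπ (π⁻¹ c) (v + u)).symm

/-- The permutations translating the head by a constant vector taken from `A`; for `A = ⊥` they
are those that never move the head. -/
def headTranslating (n k : ℕ) (A : AddSubgroup (V d)) : Subgroup (Equiv.Perm (X d n k)) where
  carrier := {π | ∃ u ∈ A, TranslatesHead u π}
  one_mem' := ⟨0, A.zero_mem, shift_zero ▸ translatesHead_shift 0⟩
  mul_mem' := fun ⟨_, hu, hπ⟩ ⟨_, hw, hρ⟩ => ⟨_, A.add_mem hu hw, hπ.mul hρ⟩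
  inv_mem' := fun ⟨_, hu, hπ⟩ => ⟨_, A.neg_mem hu, hπ.inv⟩

lemma LPgrp_le_headTranslating (A : AddSubgroup (V d)) :
    LPgrp d n k ≤ headTranslating n k A :=
  (Subgroup.closure_le _).mpr fun _ h =>
    ⟨0, A.zero_mem, fun c v => by rw [h.2, sub_zero]⟩

lemma Shiftgrp_le_headTranslating : Shiftgrp d n k ≤ headTranslating n k ⊤ := by
  rw [Shiftgrp, Subgroup.closure_le, Shiftset_eq_range_shift]
  rintro _ ⟨u, rfl⟩
  exact ⟨u, AddSubgroup.mem_top u, translatesHead_shift u⟩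

lemma translatesHead_zero_of_mem_LPgrp {π : Equiv.Perm (X d n k)} (h : π ∈ LPgrp d n k) :
    TranslatesHead 0 π := by
  obtain ⟨_, rfl, hπ⟩ := LPgrp_le_headTranslating ⊥ h
  exact hπ

lemma exists_translatesHead_of_mem_OBgrp {π : Equiv.Perm (X d n k)} (h : π ∈ OBgrp d n k) :
    ∃ u, TranslatesHead u π := by
  rw [OBgrp_eq_sup] at h
  obtain ⟨u, -, hπ⟩ := sup_le Shiftgrp_le_headTranslating (LPgrp_le_headTranslating ⊤) h
  exact ⟨u, hπ⟩

lemma mem_SPgrp_of_mem_RFAgrp {π : Equiv.Perm (X d n k)} (h : π ∈ RFAgrp d n k)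
    (hπ : TranslatesHead 0 π) : π ∈ SPgrp d n k :=
  have ⟨hRTM, htape⟩ := mem_RFAset_of_mem_RFAgrp h
  Subgroup.subset_closure ⟨hRTM, htape, fun c v => by rw [hπ, sub_zero]⟩

lemma mem_SPgrp_sup_Shiftgrp_of_mem_RFAgrp {u : V d} {π : Equiv.Perm (X d n k)}
    (h : π ∈ RFAgrp d n k) (hπ : TranslatesHead u π) :
    π ∈ SPgrp d n k ⊔ Shiftgrp d n k := by
  have hshift : shift u ∈ Shiftgrp d n k := shift_mem_Shiftgrp u
  have hSP : π * (shift u)⁻¹ ∈ SPgrp d n k := by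
    refine mem_SPgrp_of_mem_RFAgrp (mul_mem h (inv_mem (Shiftgrp_le_RFAgrp hshift))) ?_
    simpa using hπ.mul (translatesHead_shift u).inv
  simpa using Subgroup.mul_mem_sup hSP hshift

end HeadTranslation

/-- `RFA ∩ LP = SP` and `RFA ∩ OB = ⟨SP, Shift⟩`. -/
theorem rfa_inter_lp_and_ob (d n k : ℕ) (hd : 1 ≤ d) (hn : 1 ≤ n) (hk : 1 ≤ k) :
    RFAgrp d n k ⊓ LPgrp d n k = SPgrp d n k ∧
    RFAgrp d n k ⊓ OBgrp d n k = SPgrp d n k ⊔ Shiftgrp d n k := by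
  refine ⟨le_antisymm ?_ (le_inf SPgrp_le_RFAgrp SPgrp_le_LPgrp), le_antisymm ?_ ?_⟩
  · rintro π ⟨hRFA, hLP⟩
    exact mem_SPgrp_of_mem_RFAgrp hRFA (translatesHead_zero_of_mem_LPgrp hLP)
  · rintro π ⟨hRFA, hOB⟩
    obtain ⟨u, hu⟩ := exists_translatesHead_of_mem_OBgrp hOB
    exact mem_SPgrp_sup_Shiftgrp_of_mem_RFAgrp hRFA hu
  · rw [OBgrp_eq_sup]
    exact sup_le (le_inf SPgrp_le_RFAgrp (SPgrp_le_LPgrp.trans le_sup_right))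
      (le_inf Shiftgrp_le_RFAgrp le_sup_left)
end

section
/- Let d, k ≥ 1 and n ≥ 2. For every m ∈ ℕ, the free product ℤ/2ℤ ∗ ⋯ ∗ ℤ/2ℤ of m copies of ℤ/2ℤ embeds into RFA(ℤ^d,n,k). -/
open Function

/-!
A set `S` of marked cells and a displacement `u` give an involution of the head position: the
pairs `{v, v + u}` with `v ∈ S` and `v - u, v + u ∉ S` are disjoint, and their members are swapped.
Machine `i < m` uses the displacement `m` along one axis and tests the mark `i` cells ahead of the
head. Given a reduced word of length `L`, mark the cell `t * m + i` whenever letter `t` of the word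
is `i`: since adjacent letters differ, each mark is isolated, and the word carries the head along
the path `L * m, …, 2 * m, m, 0`. Hence no nonempty reduced word acts trivially.
-/

section FreeProductOfInvolutions

variable {ι G : Type*} [Group G]

/-- The homomorphism from the group of order two sending its generator to an element `a` with
`a * a = 1`. -/
def involutionHom (a : G) (ha : a * a = 1) : Multiplicative (ZMod 2) →* G :=
  AddMonoidHom.toMultiplicativeLeft <|
    ZMod.lift 2 ⟨zmultiplesHom (Additive G) (.ofMul a), by
      rw [zmultiplesHom_apply, natCast_zsmul, two_nsmul]; exact ha⟩

lemma involutionHom_of_ne_one (a : G) (ha : a * a = 1) {z : Multiplicative (ZMod 2)}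
    (hz : z ≠ 1) : involutionHom a ha z = a := by
  have hz_gen : z = .ofAdd ((1 : ℤ) : ZMod 2) := by
    revert z; decide
  rw [hz_gen]
  change (ZMod.lift 2 _ ((1 : ℤ) : ZMod 2) : Additive G).toMul = a
  rw [ZMod.lift_coe]
  exact zpow_one a

/-- The homomorphism from a free product of groups of order two determined by a family of elements
of order at most two. -/
def involutionLift (a : ι → G) (ha : ∀ i, a i * a i = 1) :
    Monoid.CoprodI (fun _ : ι => Multiplicative (ZMod 2)) →* G :=
  Monoid.CoprodI.lift fun i => involutionHom (a i) (ha i)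

lemma involutionLift_word_prod (a : ι → G) (ha : ∀ i, a i * a i = 1)
    (w : Monoid.CoprodI.Word fun _ : ι => Multiplicative (ZMod 2)) :
    involutionLift a ha w.prod = ((w.toList.map Sigma.fst).map a).prod := by
  rw [Monoid.CoprodI.Word.prod, map_list_prod, List.map_map, List.map_map]
  congr 1
  refine List.map_congr_left fun l hl => ?_
  rw [Function.comp_apply, Function.comp_apply, involutionLift, Monoid.CoprodI.lift_of,
    involutionHom_of_ne_one _ _ (w.ne_one l hl)]

lemma involutionLift_injective (a : ι → G) (ha : ∀ i, a i * a i = 1)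
    (hprod : ∀ l : List ι, l.IsChain (· ≠ ·) → l ≠ [] → (l.map a).prod ≠ 1) :
    Injective (involutionLift a ha) := by
  classical
  rw [injective_iff_map_eq_one]
  intro g hg
  obtain ⟨w, rfl⟩ := Monoid.CoprodI.Word.equiv.symm.surjective g
  change involutionLift a ha w.prod = 1 at hg
  rw [involutionLift_word_prod] at hg
  have hchain : (w.toList.map Sigma.fst).IsChain (· ≠ ·) := (List.isChain_map _).mpr w.chain_ne
  have hnil : w.toList = [] :=
    List.map_eq_nil_iff.mp (not_not.mp fun hne => hprod _ hchain hne hg)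
  change w.prod = 1
  rw [Monoid.CoprodI.Word.prod, hnil, List.map_nil, List.prod_nil]

end FreeProductOfInvolutions

section IsolatedSwap

variable {A : Type*} [AddCommGroup A]

/-- `v` is a point of `S` neither of whose neighbours at distance `u` is in `S`. -/
def IsIsolated (S : Set A) (u v : A) : Prop :=
  v ∈ S ∧ v - u ∉ S ∧ v + u ∉ S

lemma IsIsolated.not_add {S : Set A} {u v : A} (h : IsIsolated S u v) :
    ¬ IsIsolated S u (v + u) :=
  fun h' => h.2.2 h'.1

lemma isIsolated_preimage {B : Type*} [AddCommGroup B] (f : A →+ B) (S : Set B) (u v : A) :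
    IsIsolated (f ⁻¹' S) u v ↔ IsIsolated S (f u) (f v) := by
  simp only [IsIsolated, Set.mem_preimage, map_sub, map_add]

lemma isIsolated_preimage_add_right (S : Set A) (u v t : A) :
    IsIsolated ((· + t) ⁻¹' S) u v ↔ IsIsolated S u (v + t) := by
  simp only [IsIsolated, Set.mem_preimage, sub_add_eq_add_sub, add_right_comm v u t]

open Classical in
/-- The map underlying `isolatedSwap`. -/
noncomputable def isolatedSwapFun (u w : A) (S : Set A) (v : A) : A :=
  if IsIsolated S u (v + w) then v + u
  else if IsIsolated S u (v - u + w) then v - u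
  else v

lemma isolatedSwapFun_of_isIsolated {u w : A} {S : Set A} {v : A}
    (h : IsIsolated S u (v + w)) : isolatedSwapFun u w S v = v + u :=
  if_pos h

lemma isolatedSwapFun_add_of_isIsolated {u w : A} {S : Set A} {v : A}
    (h : IsIsolated S u (v + w)) : isolatedSwapFun u w S (v + u) = v := by
  have hnot : ¬ IsIsolated S u (v + u + w) := add_right_comm v u w ▸ h.not_add
  rw [isolatedSwapFun, if_neg hnot, add_sub_cancel_right, if_pos h]

lemma involutive_isolatedSwapFun (u w : A) (S : Set A) :
    Involutive (isolatedSwapFun u w S) := by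
  intro v
  by_cases hv : IsIsolated S u (v + w)
  · rw [isolatedSwapFun_of_isIsolated hv, isolatedSwapFun_add_of_isIsolated hv]
  by_cases hvu : IsIsolated S u (v - u + w)
  · obtain ⟨v, rfl⟩ : ∃ v', v = v' + u := ⟨v - u, (sub_add_cancel v u).symm⟩
    rw [add_sub_cancel_right] at hvu
    rw [isolatedSwapFun_add_of_isIsolated hvu, isolatedSwapFun_of_isIsolated hvu]
  · have hfix : isolatedSwapFun u w S v = v := by rw [isolatedSwapFun, if_neg hv, if_neg hvu]
    rw [hfix, hfix]

/-- The involution of `A` that swaps `v` with `v + u` whenever `v + w` is isolated in `S`. -/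
noncomputable def isolatedSwap (u w : A) (S : Set A) : Equiv.Perm A :=
  (involutive_isolatedSwapFun u w S).toPerm

lemma isolatedSwap_mul_self (u w : A) (S : Set A) :
    isolatedSwap u w S * isolatedSwap u w S = 1 :=
  Equiv.ext (involutive_isolatedSwapFun u w S)

lemma isolatedSwap_inv (u w : A) (S : Set A) : (isolatedSwap u w S)⁻¹ = isolatedSwap u w S :=
  inv_eq_of_mul_eq_one_left (isolatedSwap_mul_self u w S)

lemma isolatedSwap_preimage_add_right (u w : A) (S : Set A) (v t : A) :
    isolatedSwap u w ((· + t) ⁻¹' S) v + t = isolatedSwap u w S (v + t) := by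
  classical
  have hv : IsIsolated ((· + t) ⁻¹' S) u (v + w) ↔ IsIsolated S u (v + t + w) := by
    rw [isIsolated_preimage_add_right, add_right_comm]
  have hvu : IsIsolated ((· + t) ⁻¹' S) u (v - u + w) ↔ IsIsolated S u (v + t - u + w) := by
    rw [isIsolated_preimage_add_right, add_right_comm, sub_add_eq_add_sub]
  change isolatedSwapFun u w ((· + t) ⁻¹' S) v + t = isolatedSwapFun u w S (v + t)
  simp only [isolatedSwapFun, hv, hvu]
  split_ifs <;> abel

end IsolatedSwap

section LocalMove

variable {A α : Type*} [AddCommGroup A]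

/-- A tape-dependent map of head positions is a local move if it commutes with translating tape and
head together, and the displacement of the head depends only on a finite window around it. -/
def IsLocalMove (s : (A → α) → A → A) : Prop :=
  (∃ F : Finset A, DependsOn (fun x => s x 0) F) ∧
    ∀ x v t, s (fun r => x (r + t)) v + t = s x (v + t)

lemma isLocalMove_isolatedSwap (u w : A) (a : α) :
    IsLocalMove fun x : A → α => ⇑(isolatedSwap u w (x ⁻¹' {a})) := by
  classical
  refine ⟨⟨{w, w - u, w + u, w - u - u}, fun x y hxy => ?_⟩,
    fun x => isolatedSwap_preimage_add_right u w (x ⁻¹' {a})⟩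
  simp only [Finset.coe_insert, Finset.coe_singleton, Set.mem_insert_iff, Set.mem_singleton_iff,
    forall_eq_or_imp, forall_eq] at hxy
  obtain ⟨hw, hsub, hadd, hsubsub⟩ := hxy
  have hneg : (0 : A) - u + w = w - u := by abel
  change isolatedSwapFun u w _ 0 = isolatedSwapFun u w _ 0
  simp only [isolatedSwapFun, IsIsolated, Set.mem_preimage, zero_add, hneg, sub_add_cancel,
    hw, hsub, hadd, hsubsub]

end LocalMove

section LetterPositions

variable {m : ℕ}

/-- The marked cells encoding the word `l`: block `t` of length `m` has a single marked cell, at the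
offset given by letter `t`. -/
def letterPositions (l : List (Fin m)) : Set ℤ :=
  {z | ∃ t : ℕ, ∃ i ∈ l[t]?, z = t * m + (i : ℕ)}

lemma mul_add_fin_inj {p q : ℤ} {i j : Fin m} :
    p * m + (i : ℕ) = q * m + (j : ℕ) ↔ p = q ∧ i = j := by
  refine ⟨fun h => ?_, by rintro ⟨rfl, rfl⟩; rfl⟩
  have hm : (0 : ℤ) < m := by exact_mod_cast i.pos
  have hdivmod (r : ℤ) (k : Fin m) : (r * m + (k : ℕ)) / m = r ∧ (r * m + (k : ℕ)) % m = (k : ℕ) :=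
    (Int.ediv_emod_unique hm).mpr ⟨by ring, by positivity, by exact_mod_cast k.isLt⟩
  obtain ⟨hp, hi⟩ := hdivmod p i
  obtain ⟨hq, hj⟩ := hdivmod q j
  rw [h] at hp hi
  exact ⟨hp.symm.trans hq, Fin.ext (by exact_mod_cast hi.symm.trans hj)⟩

lemma mul_add_mem_letterPositions {l : List (Fin m)} {p : ℤ} {i : Fin m} :
    p * m + (i : ℕ) ∈ letterPositions l ↔ ∃ t : ℕ, p = t ∧ l[t]? = some i := by
  constructor
  · rintro ⟨t, j, hj, h⟩
    obtain ⟨hp, rfl⟩ := mul_add_fin_inj.mp h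
    exact ⟨t, hp, hj⟩
  · rintro ⟨t, rfl, hi⟩
    exact ⟨t, i, hi, rfl⟩

lemma isIsolated_letterPositions {l : List (Fin m)} (hl : l.IsChain (· ≠ ·)) {t : ℕ}
    (ht : t < l.length) : IsIsolated (letterPositions l) m (t * m + (l[t] : ℕ)) := by
  rw [List.isChain_iff_getElem] at hl
  have hprev : (t * m + (l[t] : ℕ) - m : ℤ) = (t - 1 : ℤ) * m + (l[t] : ℕ) := by ring
  have hnext : (t * m + (l[t] : ℕ) + m : ℤ) = (t + 1 : ℤ) * m + (l[t] : ℕ) := by ring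
  rw [IsIsolated, hprev, hnext]
  simp only [mul_add_mem_letterPositions, List.getElem?_eq_some_iff]
  refine ⟨⟨t, rfl, ht, rfl⟩, ?_, ?_⟩
  · rintro ⟨s, hs, hs_lt, heq⟩
    obtain rfl : t = s + 1 := by omega
    exact hl s ht heq
  · rintro ⟨s, hs, hs_lt, heq⟩
    obtain rfl : s = t + 1 := by omega
    exact hl t hs_lt heq.symm

variable {A : Type*} [AddCommGroup A]

/-- The involution of a letter `i < m`: along the axis `e`, it moves by `m` after testing the mark
at offset `i`. -/
noncomputable def letterSwap (e : A) (i : Fin m) : Set A → Equiv.Perm A :=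
  isolatedSwap (m • e) ((i : ℕ) • e)

variable (f : A →+ ℤ) {e : A}

lemma letterSwap_succ_nsmul (he : f e = 1) {l : List (Fin m)} (hl : l.IsChain (· ≠ ·)) {t : ℕ}
    (ht : t < l.length) :
    letterSwap e l[t] (f ⁻¹' letterPositions l) (((t + 1) * m) • e) = (t * m) • e := by
  have hiso : IsIsolated (f ⁻¹' letterPositions l) (m • e) ((t * m) • e + (l[t] : ℕ) • e) := by
    rw [isIsolated_preimage]
    simpa [he] using isIsolated_letterPositions hl ht
  rw [add_one_mul, add_nsmul]
  exact isolatedSwapFun_add_of_isIsolated hiso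

lemma prod_take_letterSwap_nsmul (he : f e = 1) {l : List (Fin m)} (hl : l.IsChain (· ≠ ·))
    {t : ℕ} (ht : t ≤ l.length) :
    ((l.take t).map fun i => letterSwap e i (f ⁻¹' letterPositions l)).prod ((t * m) • e) = 0 := by
  induction t with
  | zero => simp
  | succ t ih =>
    rw [List.take_succ_eq_append_getElem ht, List.map_append, List.prod_append, List.map_singleton,
      List.prod_singleton, Equiv.Perm.mul_apply, letterSwap_succ_nsmul f he hl ht,
      ih (Nat.le_of_succ_le ht)]

lemma prod_letterSwap_ne_one (he : f e = 1) {l : List (Fin m)} (hl : l.IsChain (· ≠ ·))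
    (hne : l ≠ []) : (l.map fun i => letterSwap e i (f ⁻¹' letterPositions l)).prod ≠ 1 := by
  intro hprod
  have hzero := prod_take_letterSwap_nsmul f he hl le_rfl
  rw [List.take_length, hprod, Equiv.Perm.one_apply] at hzero
  have hlen : l.length * m = 0 := by
    simpa [he] using congrArg f hzero
  have hm : 0 < m := (l.head hne).pos
  exact (Nat.mul_pos (List.length_pos_iff.mpr hne) hm).ne' hlen

end LetterPositions

section MoveHead

variable {d n k : ℕ}

/-- The configuration with tape `x` and head at `v` in state `q`. -/
def singleHead (x : V d → Fin n) (v : V d) (q : Fin k) : X d n k :=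
  ⟨(x, fun t => if t = v then some q else none), fun _ _ ht ht' =>
    (Option.isSome_ite.mp ht).trans (Option.isSome_ite.mp ht').symm⟩

lemma eq_singleHead {c : X d n k} {v : V d} {q : Fin k} (h : c.val.2 v = some q) :
    c = singleHead c.val.1 v q := by
  refine Subtype.ext (Prod.ext rfl (funext fun t => ?_))
  change c.val.2 t = if t = v then some q else none
  split_ifs with ht
  · rw [ht, h]
  · by_contra hsome
    exact ht (c.property t v (Option.isSome_iff_ne_none.mpr hsome) (h ▸ rfl))

variable (d n k) in
/-- The action of tape-dependent permutations of the head position on configurations: the tape and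
the state are left unchanged. -/
def moveHead : ((V d → Fin n) → Equiv.Perm (V d)) →* Equiv.Perm (X d n k) where
  toFun s :=
    { toFun := fun c => ⟨(c.val.1, c.val.2 ∘ (s c.val.1).symm), fun _ _ ht ht' =>
        (s c.val.1).symm.injective (c.property _ _ ht ht')⟩
      invFun := fun c => ⟨(c.val.1, c.val.2 ∘ s c.val.1), fun _ _ ht ht' =>
        (s c.val.1).injective (c.property _ _ ht ht')⟩
      left_inv := fun c => by simp [Function.comp_assoc]
      right_inv := fun c => by simp [Function.comp_assoc] }
  map_one' := rfl
  map_mul' _ _ := rfl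

lemma moveHead_singleHead (s : (V d → Fin n) → Equiv.Perm (V d)) (x : V d → Fin n) (v : V d)
    (q : Fin k) : moveHead d n k s (singleHead x v q) = singleHead x (s x v) q := by
  refine Subtype.ext (Prod.ext rfl (funext fun t => ?_))
  change (if (s x).symm t = v then some q else none) = if t = s x v then some q else none
  simp only [Equiv.symm_apply_eq]

lemma moveHead_injective (hk : 0 < k) : Injective (moveHead d n k) := by
  intro s s' hss'
  ext1 x
  ext1 v
  have hhead := congrArg (fun π => π (singleHead x v ⟨0, hk⟩)) hss'
  simp only [moveHead_singleHead] at hhead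
  by_contra hne
  have hat := congrFun (congrArg (fun c => c.val.2) hhead) (s x v)
  simp [singleHead, hne] at hat

lemma isTM_moveHead {s : (V d → Fin n) → Equiv.Perm (V d)} (hs : IsLocalMove fun x => ⇑(s x)) :
    IsTM (moveHead d n k s) := by
  obtain ⟨⟨F, hF⟩, hequiv⟩ := hs
  refine ⟨F, ∅, fun x q => (x, q, s x 0), fun x x' q hxx' => ?_, fun c hc => ?_, fun c v q hq => ?_⟩
  · exact ⟨by simp, Prod.ext rfl (hF hxx')⟩
  · exact Subtype.ext (Prod.ext rfl (funext fun t => (hc _).trans (hc t).symm))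
  · refine ⟨fun t => (if_neg (Finset.notMem_empty _)).symm, fun t => ?_⟩
    have hmove : moveHead d n k s c = singleHead c.val.1 (s c.val.1 v) q := by
      rw [eq_singleHead hq, moveHead_singleHead]
      rfl
    have htrans : v + s (fun r => c.val.1 (r + v)) 0 = s c.val.1 v := by
      rw [add_comm, hequiv, zero_add]
    rw [hmove]
    exact congrArg (fun r => if t = r then some q else none) htrans.symm

lemma moveHead_mem_RFAgrp {s : (V d → Fin n) → Equiv.Perm (V d)}
    (hs : IsLocalMove fun x => ⇑(s x)) (hs_inv : IsLocalMove fun x => ⇑(s x)⁻¹) :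
    moveHead d n k s ∈ RFAgrp d n k := by
  refine Subgroup.subset_closure ⟨⟨isTM_moveHead hs, ?_⟩, fun _ => rfl⟩
  rw [← Equiv.Perm.inv_def, ← map_inv]
  exact isTM_moveHead hs_inv

end MoveHead

section LetterMachine

variable {d n m : ℕ}

/-- The tape-dependent involution of letter `i`: the cells containing the symbol `a` are marked, and
the head moves along the axis `j`. -/
noncomputable def letterMove (j : Fin d) (a : Fin n) (i : Fin m) :
    (V d → Fin n) → Equiv.Perm (V d) :=
  fun x => letterSwap (Pi.single j 1) i (x ⁻¹' {a})

lemma letterMove_mul_self (j : Fin d) (a : Fin n) (i : Fin m) :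
    letterMove j a i * letterMove j a i = 1 :=
  funext fun _ => isolatedSwap_mul_self _ _ _

lemma prod_letterMove_ne_one (j : Fin d) {a b : Fin n} (hab : b ≠ a) {l : List (Fin m)}
    (hl : l.IsChain (· ≠ ·)) (hne : l ≠ []) : (l.map (letterMove j a)).prod ≠ 1 := by
  classical
  intro hprod
  let x : V d → Fin n := fun v => if v j ∈ letterPositions l then a else b
  have hx : x ⁻¹' {a} = Pi.evalAddMonoidHom (fun _ => ℤ) j ⁻¹' letterPositions l := by
    ext v
    simp [x, hab]
  refine prod_letterSwap_ne_one (Pi.evalAddMonoidHom (fun _ => ℤ) j) (e := Pi.single j 1)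
    (Pi.single_eq_same j 1) hl hne ?_
  calc (l.map fun i => letterSwap _ i (Pi.evalAddMonoidHom _ j ⁻¹' letterPositions l)).prod
      = (l.map fun i => letterMove j a i x).prod := by rw [← hx]; rfl
    _ = (l.map (letterMove j a)).prod x := by rw [Pi.list_prod_apply, List.map_map]; rfl
    _ = 1 := congrFun hprod x

/-- The finite-state automaton acting on head positions by `letterMove`. -/
noncomputable def letterMachine (k : ℕ) (j : Fin d) (a : Fin n) (i : Fin m) : RFAgrp d n k :=
  ⟨moveHead d n k (letterMove j a i), moveHead_mem_RFAgrp (isLocalMove_isolatedSwap _ _ a) <| by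
    simpa only [letterMove, letterSwap, isolatedSwap_inv] using isLocalMove_isolatedSwap _ _ a⟩

lemma letterMachine_mul_self (k : ℕ) (j : Fin d) (a : Fin n) (i : Fin m) :
    letterMachine k j a i * letterMachine k j a i = 1 :=
  Subtype.ext <| by
    change moveHead d n k _ * moveHead d n k _ = 1
    rw [← map_mul, letterMove_mul_self, map_one]

lemma prod_letterMachine_ne_one {k : ℕ} (hk : 0 < k) (j : Fin d) {a b : Fin n} (hab : b ≠ a)
    {l : List (Fin m)} (hl : l.IsChain (· ≠ ·)) (hne : l ≠ []) :
    (l.map (letterMachine k j a)).prod ≠ 1 := by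
  intro hprod
  refine prod_letterMove_ne_one j hab hl hne (moveHead_injective (k := k) hk ?_)
  have hval := congrArg (RFAgrp d n k).subtype hprod
  rw [map_one, map_list_prod, List.map_map] at hval
  rw [map_one, map_list_prod, List.map_map]
  exact hval

end LetterMachine

/-- For `n ≥ 2`, the free product of `m` copies of `ℤ/2ℤ` embeds into `RFA(ℤ^d,n,k)`. -/
theorem freeProduct_z2_embeds_rfa (d n k : ℕ) (hd : 1 ≤ d) (hn : 2 ≤ n) (hk : 1 ≤ k) :
    ∀ m : ℕ, ∃ φ : Monoid.CoprodI (fun _ : Fin m => Multiplicative (ZMod 2)) →* RFAgrp d n k,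
      Function.Injective ⇑φ := by
  intro m
  have hsymbols : (⟨0, by omega⟩ : Fin n) ≠ ⟨1, hn⟩ := by simp
  exact ⟨involutionLift (letterMachine k ⟨0, hd⟩ ⟨1, hn⟩) (letterMachine_mul_self k _ _),
    involutionLift_injective _ _ fun _ => prod_letterMachine_ne_one hk _ hsymbols⟩
end
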